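/- arXiv:math/0505298 — 4 statements merged into one kernel-verified Lean document; each statement's English description precedes it below -/
import Mathlib

section
/- For every real x ≥ 2, the prime counting function satisfies the exact identity π(x) = Li(x) + R(x)·x/log x − ∫₂^x R(y)·(log y − 1)/(log y)² dy + 2, where the integrand (log y − 1)/(log y)² dy is the differential d(y/log y). -/
/-- The prime counting function `π(x)`: the number of primes `p ≤ x`, as a real number. -/
noncomputable def primePi (x : ℝ) : ℝ :=
  (((Finset.range (⌊x⌋₊ + 1)).filter Nat.Prime).card : ℝ)

/-- The logarithmic integral `Li(x) = ∫₂^x dt / log t`. -/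
noncomputable def Li (x : ℝ) : ℝ := ∫ t in (2:ℝ)..x, 1 / Real.log t

/-- `R(x) = ∑_{p ≤ x, p prime} (log p)/p − log x`. -/
noncomputable def RFun (x : ℝ) : ℝ :=
  (∑ p ∈ (Finset.range (⌊x⌋₊ + 1)).filter Nat.Prime, Real.log p / p) - Real.log x

/-- The exact identity
`π(x) = Li(x) + R(x)·x/log x − ∫₂^x R(y)·(log y − 1)/(log y)² dy + 2` for `x ≥ 2`. -/
theorem primePi_eq_Li_add_RFun (x : ℝ) (hx : 2 ≤ x) :
    primePi x = Li x + RFun x * x / Real.log x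
      - (∫ y in (2:ℝ)..x, RFun y * (Real.log y - 1) / (Real.log y) ^ 2) + 2 := by
  set c : ℕ → ℝ := fun k => if k.Prime then Real.log k / k else 0 with hc
  have hS : ∀ y : ℝ, ∑ k ∈ Finset.Icc 0 ⌊y⌋₊, c k = RFun y + Real.log y := by
    intro y
    have h1 : Finset.range (⌊y⌋₊ + 1) = Finset.Icc 0 ⌊y⌋₊ := by
      ext; simp [Nat.lt_succ_iff]
    simp only [RFun, hc, h1, Finset.sum_filter]
    ring
  have hlog : ∀ t ∈ Set.Icc (2:ℝ) x, 0 < Real.log t := fun t ht =>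
    Real.log_pos (by linarith [ht.1])
  have hd : ∀ t ∈ Set.Icc (2:ℝ) x, HasDerivAt (fun t : ℝ => t / Real.log t)
      ((Real.log t - 1) / (Real.log t) ^ 2) t := by
    intro t ht
    have h0 : t ≠ 0 := by linarith [ht.1]
    have := (hasDerivAt_id t).div (Real.hasDerivAt_log h0) (hlog t ht).ne'
    have e : (Real.log t - 1) / (Real.log t) ^ 2 =
        (1 * Real.log t - id t * t⁻¹) / (Real.log t) ^ 2 := by simp [h0]
    rw [e]
    exact this
  have hlc : ContinuousOn Real.log (Set.Icc (2:ℝ) x) :=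
    Real.continuousOn_log.mono (by intro t ht; simp; linarith [ht.1])
  have hg : ContinuousOn (fun t : ℝ => (Real.log t - 1) / (Real.log t) ^ 2) (Set.Icc (2:ℝ) x) :=
    (hlc.sub continuousOn_const).div (hlc.pow 2) (fun t ht => by have := hlog t ht; positivity)
  have hgi : MeasureTheory.IntegrableOn (fun t : ℝ => (Real.log t - 1) / (Real.log t) ^ 2)
      (Set.Icc (2:ℝ) x) := hg.integrableOn_Icc
  have hdi : MeasureTheory.IntegrableOn (deriv (fun t : ℝ => t / Real.log t))
      (Set.Icc (2:ℝ) x) :=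
    hgi.congr_fun (fun t ht => (hd t ht).deriv.symm) measurableSet_Icc
  have key := sum_mul_eq_sub_integral_mul₁ c (f := fun t : ℝ => t / Real.log t)
    (by simp [hc]) (by simp [hc]) x (fun t ht => (hd t ht).differentiableAt) hdi
  have hpi : primePi x = ∑ k ∈ Finset.Icc 0 ⌊x⌋₊, (k:ℝ) / Real.log k * c k := by
    have h1 : Finset.range (⌊x⌋₊ + 1) = Finset.Icc 0 ⌊x⌋₊ := by
      ext; simp [Nat.lt_succ_iff]
    rw [primePi, h1, Finset.card_filter]
    push_cast
    refine Finset.sum_congr rfl fun k _ => ?_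
    by_cases hk : k.Prime
    · have h2 : (1:ℝ) < k := by exact_mod_cast hk.one_lt
      have := Real.log_pos h2
      have h3 : (k:ℝ) ≠ 0 := by linarith
      simp only [hc, hk, if_true]
      field_simp
    · simp [hc, hk]
  have hI1 : IntervalIntegrable (fun y => RFun y * (Real.log y - 1) / (Real.log y) ^ 2
      + (1 - 1 / Real.log y)) MeasureTheory.volume 2 x := by
    rw [intervalIntegrable_iff_integrableOn_Icc_of_le hx]
    refine (integrableOn_mul_sum_Icc (m := 0) c (by norm_num) hgi).congr_fun
      (fun t ht => ?_) measurableSet_Icc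
    have := hlog t ht
    simp only [hS]
    field_simp
  have hI2 : IntervalIntegrable (fun y => 1 / Real.log y) MeasureTheory.volume 2 x := by
    rw [intervalIntegrable_iff_integrableOn_Icc_of_le hx]
    exact (continuousOn_const.div hlc fun t ht => (hlog t ht).ne').integrableOn_Icc
  have hI3 : IntervalIntegrable (fun y => 1 - 1 / Real.log y) MeasureTheory.volume 2 x :=
    intervalIntegrable_const.sub hI2
  have hI4 : IntervalIntegrable (fun y => RFun y * (Real.log y - 1) / (Real.log y) ^ 2)
      MeasureTheory.volume 2 x := by
    simpa using hI1.sub hI3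
  have hint : (∫ t in Set.Ioc 2 x, deriv (fun t : ℝ => t / Real.log t) t *
      ∑ k ∈ Finset.Icc 0 ⌊t⌋₊, c k) =
      (∫ y in (2:ℝ)..x, RFun y * (Real.log y - 1) / (Real.log y) ^ 2) + ((x - 2) - Li x) := by
    have h5 : (∫ y in (2:ℝ)..x, (1 - 1 / Real.log y)) = (x - 2) - Li x := by
      rw [intervalIntegral.integral_sub intervalIntegrable_const hI2, Li]
      simp
    rw [← h5, ← intervalIntegral.integral_add hI4 hI3, intervalIntegral.integral_of_le hx]
    refine MeasureTheory.setIntegral_congr_fun measurableSet_Ioc fun t ht => ?_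
    have ht' := Set.Ioc_subset_Icc_self ht
    have := hlog t ht'
    simp only [hS, (hd t ht').deriv]
    field_simp
  have hlx := hlog x ⟨hx, le_rfl⟩
  rw [hpi, key, hint, hS]
  field_simp
  ring
end

section
/- The function R(x) = Σ_{p ≤ x, p prime} (log p)/p − log x converges as x → ∞, and its limit equals −γ − Σ_{k ≥ 2} Σ_{p prime} (log p)/p^k, where γ is the Euler–Mascheroni constant. -/
section
open MeasureTheory Filter Topology Set Complex

noncomputable def fejK (v : ℝ) : ℝ := Real.sinc (v / 2) ^ 2

lemma fejK_nonneg (v : ℝ) : 0 ≤ fejK v := sq_nonneg _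

lemma fejK_cont : Continuous fejK := by
  unfold fejK
  exact (Real.continuous_sinc.comp (continuous_id.div_const 2)).pow 2

lemma fejK_le (v : ℝ) : fejK v ≤ 5 * (1 + v ^ 2)⁻¹ := by
  have h1 : fejK v ≤ 1 := by
    unfold fejK
    rw [sq_le_one_iff_abs_le_one]
    exact Real.abs_sinc_le_one _
  have h2 : fejK v * v ^ 2 ≤ 4 := by
    by_cases hv : v = 0
    · simp [hv]
    · unfold fejK
      rw [Real.sinc_of_ne_zero (by positivity)]
      have := Real.sin_sq_le_one (v / 2)
      have e : (Real.sin (v / 2) / (v / 2)) ^ 2 * v ^ 2 = 4 * Real.sin (v / 2) ^ 2 := by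
        field_simp
        try ring
      rw [e]; linarith
  rw [← div_eq_mul_inv, le_div_iff₀ (by positivity)]
  linarith

lemma fejK_int : Integrable fejK := by
  refine (integrable_inv_one_add_sq.const_mul 5).mono' fejK_cont.aestronglyMeasurable ?_
  filter_upwards with v
  rw [Real.norm_of_nonneg (fejK_nonneg v)]
  exact fejK_le v

lemma fejK_integral_pos : 0 < ∫ v, fejK v := by
  refine (integral_pos_iff_support_of_nonneg fejK_nonneg fejK_int).2 ?_
  refine (fejK_cont.isOpen_support).measure_pos volume ⟨0, ?_⟩
  simp [fejK]

lemma fejK_tail : Tendsto (fun V : ℝ => ∫ v, {v : ℝ | V < |v|}.indicator fejK v) atTop (𝓝 0) := by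
  have : (0:ℝ) = ∫ v : ℝ, (0:ℝ) := by simp
  rw [this]
  refine tendsto_integral_filter_of_dominated_convergence fejK ?_ ?_ fejK_int ?_
  · filter_upwards with V
    exact fejK_cont.aestronglyMeasurable.indicator (measurableSet_lt measurable_const (by fun_prop))
  · filter_upwards with V
    filter_upwards with v
    refine (norm_indicator_le_norm_self _ _).trans ?_
    rw [Real.norm_of_nonneg (fejK_nonneg v)]
  · filter_upwards with v
    refine tendsto_const_nhds.congr' ?_
    filter_upwards [eventually_ge_atTop |v|] with V hV
    simp [indicator, hV.not_gt]

lemma fejK_half (v : ℝ) : ∫ y in (0:ℝ)..1, (1 - y) * Real.cos (v * y) = fejK v / 2 := by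
  by_cases hv : v = 0
  · subst hv
    simp only [zero_mul, Real.cos_zero, mul_one]
    rw [intervalIntegral.integral_sub (by simp) (by simp)]
    simp [fejK]; norm_num
  have := intervalIntegral.integral_eq_sub_of_hasDerivAt (a := 0) (b := 1)
    (f := fun y : ℝ => (1 - y) * Real.sin (v * y) / v - Real.cos (v * y) / v ^ 2)
    (f' := fun y => (1 - y) * Real.cos (v * y)) ?_ ?_
  · rw [this]
    unfold fejK
    rw [Real.sinc_of_ne_zero (by positivity)]
    have : Real.cos v = 1 - 2 * Real.sin (v / 2) ^ 2 := by
      have h := Real.cos_two_mul (v / 2)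
      have h' := Real.sin_sq_add_cos_sq (v / 2)
      rw [show 2 * (v / 2) = v by ring] at h
      linarith
    simp [this]
    field_simp
    ring
  · intro y _
    have h0 : HasDerivAt (fun y : ℝ => v * y) v y := by simpa using (hasDerivAt_id y).const_mul v
    have h1 := (((hasDerivAt_id y).const_sub 1).mul h0.sin).div_const v
    have h2 := h0.cos.div_const (v ^ 2)
    convert! h1.sub h2 using 1
    simp
    field_simp
    ring
  · apply Continuous.intervalIntegrable; fun_prop

lemma fejK_fourier (v : ℝ) :
    ∫ y in (-1:ℝ)..1, ((1 - |y| : ℝ) : ℂ) * cexp (I * (v * y)) = fejK v := by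
  have hc : Continuous fun y : ℝ => ((1 - |y| : ℝ) : ℂ) * cexp (I * (v * y)) := by fun_prop
  rw [← intervalIntegral.integral_add_adjacent_intervals (b := 0) (hc.intervalIntegrable _ _)
    (hc.intervalIntegrable _ _)]
  have h1 : ∫ y in (-1:ℝ)..0, ((1 - |y| : ℝ) : ℂ) * cexp (I * (v * y)) =
      ∫ y in (0:ℝ)..1, ((1 - |y| : ℝ) : ℂ) * cexp (-(I * (v * y))) := by
    have := intervalIntegral.integral_comp_neg (a := 0) (b := 1)
      (fun y : ℝ => ((1 - |y| : ℝ) : ℂ) * cexp (I * (v * y)))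
    simp only [neg_zero] at this
    rw [← this]
    simp
  rw [h1, ← intervalIntegral.integral_add (by apply Continuous.intervalIntegrable; fun_prop)
    (by apply Continuous.intervalIntegrable; fun_prop)]
  have h2 := fejK_half v
  have : fejK v = 2 * ∫ y in (0:ℝ)..1, (1 - y) * Real.cos (v * y) := by rw [h2]; ring
  rw [this]
  push_cast
  rw [← intervalIntegral.integral_ofReal, ← intervalIntegral.integral_const_mul]
  refine intervalIntegral.integral_congr fun y hy => ?_
  simp at hy
  simp only [abs_of_nonneg hy.1]
  push_cast
  have e1 : I * ((v:ℂ) * y) = ((v:ℂ) * y) * I := by ring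
  have e2 : -(I * ((v:ℂ) * y)) = -((v:ℂ) * y) * I := by ring
  rw [Complex.cos, e1]
  have e3 : -(((v:ℂ) * y) * I) = -((v:ℂ) * y) * I := by ring
  rw [e3]
  ring

lemma taub_fourier {a : ℝ → ℝ} (ha : Measurable a) {M : ℝ} (hM : ∀ u, 0 ≤ u → |a u| ≤ M)
    {H : ℂ → ℂ}
    (hL : ∀ s : ℂ, 0 < s.re → ∫ u in Ioi (0:ℝ), (a u : ℂ) * cexp (-s * u) = H s)
    (lam T : ℝ) {ε : ℝ} (hε : 0 < ε) :
    ∫ u in Ioi (0:ℝ), (a u : ℂ) * cexp (-ε * u) * fejK (lam * (T - u)) =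
      ∫ y in (-1:ℝ)..1, ((1 - |y| : ℝ) : ℂ) * cexp (I * (lam * T * y)) * H (ε + I * (lam * y)) := by
  have hint : IntegrableOn (fun u : ℝ => (a u : ℂ) * cexp (-ε * u)) (Ioi 0) := by
    have h0 : IntegrableOn (fun u : ℝ => cexp (-(ε:ℂ) * u)) (Ioi 0) :=
      integrableOn_exp_mul_complex_Ioi (by simpa using hε) 0
    refine Integrable.bdd_mul (c := M) h0 ?_ ?_
    · exact (measurable_ofReal.comp ha).aestronglyMeasurable
    · refine (ae_restrict_iff' measurableSet_Ioi).2 (ae_of_all _ fun u hu => ?_)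
      rw [norm_real]
      exact hM u (le_of_lt hu)
  have hphi : IntegrableOn (fun y : ℝ => ((1 - |y| : ℝ) : ℂ)) (Ioc (-1) 1) := by
    have : Continuous fun y : ℝ => ((1 - |y| : ℝ) : ℂ) := by fun_prop
    exact (this.integrableOn_Icc (a := -1) (b := 1)).mono_set Ioc_subset_Icc_self
  have hprod : Integrable (fun z : ℝ × ℝ => cexp (I * ((lam * (T - z.1) : ℝ) * z.2)) *
      (((a z.1 : ℂ) * cexp (-ε * z.1)) * ((1 - |z.2| : ℝ) : ℂ)))
      ((volume.restrict (Ioi 0)).prod (volume.restrict (Ioc (-1) 1))) := by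
    refine Integrable.bdd_mul (c := 1) (hint.mul_prod hphi) ?_ ?_
    · exact Continuous.aestronglyMeasurable (by fun_prop)
    · refine ae_of_all _ fun z => ?_
      rw [Complex.norm_exp]
      simp
  calc _ = ∫ u in Ioi (0:ℝ), ∫ y in Ioc (-1:ℝ) 1, cexp (I * ((lam * (T - u) : ℝ) * y)) *
      (((a u : ℂ) * cexp (-ε * u)) * ((1 - |y| : ℝ) : ℂ)) := by
        refine integral_congr_ae (ae_of_all _ fun u => ?_)
        simp only
        rw [← fejK_fourier, intervalIntegral.integral_of_le (by norm_num), ← integral_const_mul]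
        refine integral_congr_ae (ae_of_all _ fun y => ?_)
        simp only
        ring
    _ = ∫ y in Ioc (-1:ℝ) 1, ∫ u in Ioi (0:ℝ), cexp (I * ((lam * (T - u) : ℝ) * y)) *
      (((a u : ℂ) * cexp (-ε * u)) * ((1 - |y| : ℝ) : ℂ)) := integral_integral_swap hprod
    _ = _ := by
        rw [intervalIntegral.integral_of_le (by norm_num)]
        refine integral_congr_ae (ae_of_all _ fun y => ?_)
        simp only
        rw [← hL _ (by simpa using hε), ← integral_const_mul]
        refine integral_congr_ae (ae_of_all _ fun u => ?_)
        simp only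
        have : cexp (I * ((lam * (T - u) : ℝ) * y)) * cexp (-ε * u) =
            cexp (I * (lam * T * y)) * cexp (-(ε + I * (lam * y)) * u) := by
          rw [← Complex.exp_add, ← Complex.exp_add]
          congr 1
          push_cast
          ring
        linear_combination (a u : ℂ) * ((1 - |y| : ℝ) : ℂ) * this

lemma taub_limit {a : ℝ → ℝ} (ha : Measurable a) {M : ℝ} (hM : ∀ u, 0 ≤ u → |a u| ≤ M)
    {H : ℂ → ℂ} (hH : ContinuousOn H {s | 0 ≤ s.re})
    (hL : ∀ s : ℂ, 0 < s.re → ∫ u in Ioi (0:ℝ), (a u : ℂ) * cexp (-s * u) = H s)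
    {lam : ℝ} (hlam : 0 < lam) (T : ℝ) :
    ∫ u in Ioi (0:ℝ), (a u : ℂ) * fejK (lam * (T - u)) =
      ∫ y in (-1:ℝ)..1, ((1 - |y| : ℝ) : ℂ) * cexp (I * (lam * T * y)) * H (I * (lam * y)) := by
  have hK : Integrable fun u => fejK (lam * (T - u)) :=
    (fejK_int.comp_mul_left' hlam.ne').comp_sub_left T
  have l1 : Tendsto (fun ε : ℝ => ∫ u in Ioi (0:ℝ), (a u : ℂ) * cexp (-ε * u) * fejK (lam * (T - u)))
      (𝓝[>] 0) (𝓝 (∫ u in Ioi (0:ℝ), (a u : ℂ) * fejK (lam * (T - u)))) := by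
    refine tendsto_integral_filter_of_dominated_convergence
      (fun u => M * fejK (lam * (T - u))) ?_ ?_ (hK.const_mul M).integrableOn ?_
    · filter_upwards with ε
      have h1 : Measurable fun u : ℝ => (a u : ℂ) := measurable_ofReal.comp ha
      have h2 : Measurable fun u : ℝ => ((fejK (lam * (T - u)) : ℝ) : ℂ) :=
        measurable_ofReal.comp (fejK_cont.measurable.comp (by fun_prop))
      exact Measurable.aestronglyMeasurable (by fun_prop)
    · filter_upwards [self_mem_nhdsWithin] with ε hε
      refine (ae_restrict_iff' measurableSet_Ioi).2 (ae_of_all _ fun u hu => ?_)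
      have hu' : 0 < u := hu
      have hε' : 0 < ε := hε
      rw [norm_mul, norm_mul, norm_real, norm_real, Complex.norm_exp,
        Real.norm_of_nonneg (fejK_nonneg _)]
      have e1 : Real.exp ((-(ε:ℂ) * u).re) ≤ 1 := by
        rw [Real.exp_le_one_iff]
        simp
        positivity
      have e2 := hM u hu'.le
      have e3 : ‖a u‖ * Real.exp ((-(ε:ℂ) * u).re) ≤ M * 1 :=
        mul_le_mul e2 e1 (by positivity) ((abs_nonneg _).trans e2)
      have := mul_le_mul_of_nonneg_right e3 (fejK_nonneg (lam * (T - u)))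
      simpa using this
    · refine ae_of_all _ fun u => ?_
      have : Continuous fun ε : ℝ => (a u : ℂ) * cexp (-ε * u) * fejK (lam * (T - u)) := by fun_prop
      have := (this.tendsto 0).mono_left (nhdsWithin_le_nhds (s := Ioi 0))
      simpa using this
  have hcomp : IsCompact ((fun z : ℝ × ℝ => (z.1 : ℂ) + I * (lam * z.2)) '' (Icc 0 1 ×ˢ Icc (-1) 1)) :=
    (isCompact_Icc.prod isCompact_Icc).image (by fun_prop)
  obtain ⟨B, hB⟩ := hcomp.exists_bound_of_continuousOn (f := H) (hH.mono (by
    rintro _ ⟨z, hz, rfl⟩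
    simpa using hz.1.1))
  have hmapcont : ∀ ε : ℝ, 0 ≤ ε → Continuous fun y : ℝ => H (ε + I * (lam * y)) := by
    intro ε hε
    refine hH.comp_continuous (by fun_prop) fun y => ?_
    simpa using hε
  have l2 : Tendsto (fun ε : ℝ => ∫ y in (-1:ℝ)..1,
      ((1 - |y| : ℝ) : ℂ) * cexp (I * (lam * T * y)) * H (ε + I * (lam * y)))
      (𝓝[>] 0) (𝓝 (∫ y in (-1:ℝ)..1,
      ((1 - |y| : ℝ) : ℂ) * cexp (I * (lam * T * y)) * H (I * (lam * y)))) := by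
    refine intervalIntegral.tendsto_integral_filter_of_dominated_convergence (fun _ => B) ?_ ?_
      (by simp) ?_
    · filter_upwards [self_mem_nhdsWithin] with ε hε
      have := hmapcont ε (le_of_lt hε)
      exact (Continuous.mul (by fun_prop) this).aestronglyMeasurable
    · filter_upwards [Ioc_mem_nhdsGT (zero_lt_one' ℝ)] with ε hε
      refine ae_of_all _ fun y hy => ?_
      rw [uIoc_of_le (by norm_num)] at hy
      have hb := hB _ ⟨(ε, y), ⟨⟨hε.1.le, hε.2⟩, ⟨hy.1.le, hy.2⟩⟩, rfl⟩
      simp only at hb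
      have hy1 : |y| ≤ 1 := abs_le.2 ⟨hy.1.le, hy.2⟩
      have hy0 := abs_nonneg y
      rw [norm_mul, norm_mul, norm_real, Complex.norm_exp, Real.norm_of_nonneg (by linarith)]
      have : (I * ((lam:ℂ) * T * y)).re = 0 := by simp
      rw [this, Real.exp_zero, mul_one]
      have := norm_nonneg (H (ε + I * (lam * y)))
      nlinarith
    · refine ae_of_all _ fun y hy => ?_
      refine Tendsto.const_mul _ ?_
      have h0 : I * ((lam:ℂ) * y) ∈ {s : ℂ | 0 ≤ s.re} := by simp
      refine (hH _ h0).tendsto.comp ?_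
      refine tendsto_nhdsWithin_iff.2 ⟨?_, ?_⟩
      · have : Continuous fun ε : ℝ => (ε:ℂ) + I * (lam * y) := by fun_prop
        have := (this.tendsto 0).mono_left (nhdsWithin_le_nhds (s := Ioi 0))
        simpa using this
      · filter_upwards [self_mem_nhdsWithin] with ε hε
        simpa using le_of_lt hε
  refine tendsto_nhds_unique l1 (l2.congr' ?_)
  filter_upwards [self_mem_nhdsWithin] with ε hε
  exact (taub_fourier ha hM hL lam T hε).symm

lemma taub_J {a : ℝ → ℝ} (ha : Measurable a) {M : ℝ} (hM : ∀ u, 0 ≤ u → |a u| ≤ M)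
    {H : ℂ → ℂ} (hH : ContinuousOn H {s | 0 ≤ s.re})
    (hL : ∀ s : ℂ, 0 < s.re → ∫ u in Ioi (0:ℝ), (a u : ℂ) * cexp (-s * u) = H s)
    {lam : ℝ} (hlam : 0 < lam) :
    Tendsto (fun T : ℝ => ∫ v, (Ioi (0:ℝ)).indicator a (T - v / lam) * fejK v) atTop (𝓝 0) := by
  -- complex-valued convergence by Riemann-Lebesgue
  have h1 : Tendsto (fun T : ℝ => ∫ u in Ioi (0:ℝ), (a u : ℂ) * fejK (lam * (T - u)))
      atTop (𝓝 0) := by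
    have hRL := Real.tendsto_integral_exp_smul_cocompact (fun y : ℝ =>
      (Ioc (-1:ℝ) 1).indicator (fun y => ((1 - |y| : ℝ) : ℂ) * H (I * (lam * y))) y)
    have hmap : Tendsto (fun T : ℝ => -(lam * T / (2 * Real.pi))) atTop (cocompact ℝ) := by
      refine Tendsto.mono_right ?_ (atBot_le_cocompact)
      refine tendsto_neg_atTop_atBot.comp ?_
      exact (tendsto_id.const_mul_atTop hlam).atTop_div_const (by positivity)
    refine (hRL.comp hmap).congr fun T => ?_
    rw [taub_limit ha hM hH hL hlam T, intervalIntegral.integral_of_le (by norm_num),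
      ← integral_indicator measurableSet_Ioc]
    refine integral_congr_ae (ae_of_all _ fun y => ?_)
    by_cases hy : y ∈ Ioc (-1:ℝ) 1
    · simp only [indicator_of_mem hy]
      rw [Circle.smul_def, Real.fourierChar_apply, smul_eq_mul]
      have : (((2 * Real.pi * -(y * -(lam * T / (2 * Real.pi))) : ℝ) : ℂ) * I) =
          I * (lam * T * y) := by
        have : 2 * Real.pi * -(y * -(lam * T / (2 * Real.pi))) = lam * T * y := by
          field_simp
        rw [this]; push_cast; ring
      rw [this]
      ring
    · simp only [indicator_of_notMem hy, smul_zero]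
  have h2 : Tendsto (fun T : ℝ => ∫ u in Ioi (0:ℝ), a u * fejK (lam * (T - u)))
      atTop (𝓝 0) := by
    have := (continuous_re.tendsto 0).comp h1
    simp only [zero_re] at this
    refine this.congr fun T => ?_
    simp only [Function.comp]
    have hc : ∫ u in Ioi (0:ℝ), (a u : ℂ) * fejK (lam * (T - u)) =
        ((∫ u in Ioi (0:ℝ), a u * fejK (lam * (T - u)) : ℝ) : ℂ) := by
      rw [← integral_complex_ofReal]; simp
    rw [hc, ofReal_re]
  have h3 := h2.const_mul lam
  rw [mul_zero] at h3
  refine h3.congr fun T => ?_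
  rw [← integral_indicator measurableSet_Ioi]
  have e1 : ∀ u, (Ioi (0:ℝ)).indicator (fun u => a u * fejK (lam * (T - u))) u =
      (fun w => (Ioi (0:ℝ)).indicator a (T - (lam * w) / lam) * fejK (lam * w)) (T - u) := by
    intro u
    simp only
    rw [mul_div_cancel_left₀ _ hlam.ne', sub_sub_cancel]
    by_cases hu : u ∈ Ioi (0:ℝ) <;> simp [indicator, hu]
  simp_rw [e1]
  rw [integral_sub_left_eq_self (fun w => (Ioi (0:ℝ)).indicator a (T - (lam * w) / lam) * fejK (lam * w))
    volume T, Measure.integral_comp_mul_left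
    (fun v => (Ioi (0:ℝ)).indicator a (T - v / lam) * fejK v) lam, abs_of_pos (inv_pos.2 hlam), smul_eq_mul,
    ← mul_assoc, mul_inv_cancel₀ hlam.ne', one_mul]

theorem tauberian {a : ℝ → ℝ} (ha : Measurable a) {M : ℝ} (hM : ∀ u, 0 ≤ u → |a u| ≤ M)
    (hslow : ∀ u v, u ≤ v → a u - (v - u) ≤ a v)
    {H : ℂ → ℂ} (hH : ContinuousOn H {s | 0 ≤ s.re})
    (hL : ∀ s : ℂ, 0 < s.re → ∫ u in Ioi (0:ℝ), (a u : ℂ) * cexp (-s * u) = H s) :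
    Tendsto a atTop (𝓝 0) := by
  have hM0 : 0 ≤ M := (abs_nonneg _).trans (hM 0 le_rfl)
  set b := (Ioi (0:ℝ)).indicator a with hb
  have hbM : ∀ u, |b u| ≤ M := by
    intro u
    by_cases hu : u ∈ Ioi (0:ℝ)
    · rw [hb, indicator_of_mem hu]; exact hM u (le_of_lt hu)
    · rw [hb, indicator_of_notMem hu]; simpa using hM0
  have hbm : Measurable b := ha.indicator measurableSet_Ioi
  set κ := ∫ v, fejK v with hκ
  have hκ0 : 0 < κ := fejK_integral_pos
  rw [Metric.tendsto_nhds]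
  intro η hη
  set δ := η / 3 with hδ
  have hδ0 : 0 < δ := by positivity
  have htail := (fejK_tail.const_mul (2 * M))
  rw [mul_zero] at htail
  obtain ⟨V, hV1, hV0⟩ := ((htail.eventually_lt_const (show 0 < κ * δ by positivity)).and
    (eventually_gt_atTop 0)).exists
  set τ := ∫ v, {v : ℝ | V < |v|}.indicator fejK v with hτ
  set lam := 2 * V / δ with hlam
  have hlam0 : 0 < lam := by positivity
  have hJ := taub_J ha hM hH hL hlam0
  have hVl : V / lam = δ / 2 := by rw [hlam]; field_simp
  have hclose : ∀ v, |v| ≤ V → |v / lam| ≤ δ / 2 := by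
    intro v hv
    rw [abs_div, abs_of_pos hlam0, ← hVl]
    gcongr
  have htint : Integrable ({v : ℝ | V < |v|}.indicator fejK) :=
    fejK_int.indicator (measurableSet_lt measurable_const (by fun_prop))
  have hbint : ∀ c, Integrable fun v => b (c - v / lam) * fejK v := by
    intro c
    refine fejK_int.bdd_mul (c := M) ?_ (ae_of_all _ fun v => hbM _)
    exact (hbm.comp (by fun_prop)).aestronglyMeasurable
  have e1 : ∀ᶠ T in atTop, |∫ v, b (T + δ / 2 - v / lam) * fejK v| < κ * δ := by
    have := (hJ.comp (tendsto_atTop_add_const_right _ (δ / 2) tendsto_id)).abs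
    rw [abs_zero] at this
    exact this.eventually_lt_const (by positivity)
  have e2 : ∀ᶠ T in atTop, |∫ v, b (T - δ / 2 - v / lam) * fejK v| < κ * δ := by
    have := (hJ.comp (tendsto_atTop_add_const_right _ (-(δ / 2)) tendsto_id)).abs
    rw [abs_zero] at this
    exact this.eventually_lt_const (by positivity)
  filter_upwards [e1, e2, eventually_gt_atTop δ] with T h1 h2 hT
  have hT0 : 0 < T := hδ0.trans hT
  have haT := hM T hT0.le
  rw [abs_le] at haT
  rw [abs_lt] at h1 h2
  have hup : (a T - δ) * κ - 2 * M * τ ≤ ∫ v, b (T + δ / 2 - v / lam) * fejK v := by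
    rw [hκ, hτ, ← integral_const_mul, ← integral_const_mul, ← integral_sub (fejK_int.const_mul _)
      (htint.const_mul _)]
    refine integral_mono ((fejK_int.const_mul _).sub (htint.const_mul _)) (hbint _) fun v => ?_
    have hk := fejK_nonneg v
    simp only
    by_cases hv : V < |v|
    · rw [indicator_of_mem (show v ∈ {v : ℝ | V < |v|} from hv)]
      have := (abs_le.1 (hbM (T + δ / 2 - v / lam))).1
      nlinarith
    · rw [indicator_of_notMem (show v ∉ {v : ℝ | V < |v|} from hv)]
      have hc := abs_le.1 (hclose v (not_lt.1 hv))
      have hpos : T + δ / 2 - v / lam ∈ Ioi (0:ℝ) := by simp only [mem_Ioi]; linarith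
      rw [hb, indicator_of_mem hpos]
      have := hslow T (T + δ / 2 - v / lam) (by linarith)
      nlinarith
  have hlo : ∫ v, b (T - δ / 2 - v / lam) * fejK v ≤ (a T + δ) * κ + 2 * M * τ := by
    rw [hκ, hτ, ← integral_const_mul, ← integral_const_mul, ← integral_add (fejK_int.const_mul _)
      (htint.const_mul _)]
    refine integral_mono (hbint _) ((fejK_int.const_mul _).add (htint.const_mul _)) fun v => ?_
    have hk := fejK_nonneg v
    simp only
    by_cases hv : V < |v|
    · rw [indicator_of_mem (show v ∈ {v : ℝ | V < |v|} from hv)]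
      have := (abs_le.1 (hbM (T - δ / 2 - v / lam))).2
      nlinarith
    · rw [indicator_of_notMem (show v ∉ {v : ℝ | V < |v|} from hv)]
      have hc := abs_le.1 (hclose v (not_lt.1 hv))
      have hpos : T - δ / 2 - v / lam ∈ Ioi (0:ℝ) := by simp only [mem_Ioi]; linarith
      rw [hb, indicator_of_mem hpos]
      have := hslow (T - δ / 2 - v / lam) T (by linarith)
      nlinarith
  rw [Real.dist_eq, sub_zero, abs_lt]
  have hη3 : η = 3 * δ := by rw [hδ]; ring
  rw [hη3]
  constructor
  · by_contra hcon
    have : (a T + 3 * δ) * κ ≤ 0 := mul_nonpos_of_nonpos_of_nonneg (by linarith) hκ0.le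
    nlinarith
  · by_contra hcon
    have : 0 ≤ (a T - 3 * δ) * κ := mul_nonneg (by linarith) hκ0.le
    nlinarith


lemma zeta_piece : ∃ H : ℂ → ℂ, ContinuousOn H {s | 0 ≤ s.re} ∧ ∀ s : ℂ, 0 < s.re →
    LSeries (fun n => (ArithmeticFunction.vonMangoldt n : ℂ)) (s + 1) =
      1 / s - Real.eulerMascheroniConstant + s * H s := by
  have hZ1 : riemannZeta₁ 1 = 1 := by simp
  have hne : ∀ s : ℂ, 1 ≤ s.re → riemannZeta₁ s ≠ 0 := by
    intro s hs
    by_cases h1 : s = 1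
    · rw [h1, hZ1]; simp
    · have := riemannZeta_ne_zero_of_one_le_re hs
      rw [riemannZeta_eq_inv_sub_mul h1] at this
      exact right_ne_zero_of_mul this
  have hd := differentiable_riemannZeta₁
  set G : ℂ → ℂ := fun s => -(deriv riemannZeta₁ (s + 1) / riemannZeta₁ (s + 1)) with hG
  have hGd : ∀ s : ℂ, 0 ≤ s.re → DifferentiableAt ℂ G s := by
    intro s hs
    have h1 : DifferentiableAt ℂ (fun s => riemannZeta₁ (s + 1)) s := by fun_prop
    have h2 : DifferentiableAt ℂ (fun s => deriv riemannZeta₁ (s + 1)) s := by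
      have := hd.deriv
      fun_prop
    exact (h2.div h1 (hne _ (by simpa using hs))).neg
  refine ⟨dslope G 0, ?_, ?_⟩
  · intro s hs
    apply ContinuousAt.continuousWithinAt
    by_cases h0 : s = 0
    · rw [h0]; exact continuousAt_dslope_same.2 (hGd 0 (by simp))
    · exact (continuousAt_dslope_of_ne h0).2 (hGd s hs).continuousAt
  · intro s hs
    have hs0 : s ≠ 0 := by rintro rfl; simp at hs
    have hs1 : s + 1 ≠ 1 := by simpa using hs0
    rw [dslope_of_ne _ hs0, slope_def_field,
      ArithmeticFunction.LSeries_vonMangoldt_eq_deriv_riemannZeta_div (by simpa using hs),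
      deriv_riemannZeta_eq_neg_inv_sub_sq_mul_add hs1, riemannZeta_eq_inv_sub_mul hs1]
    have := hne (s + 1) (by simp; exact hs.le)
    simp only [hG, zero_add, deriv_riemannZeta₁_one, hZ1]
    simp only [add_sub_cancel_right]
    field_simp
    ring

open ArithmeticFunction in
lemma mertens_aux (n : ℕ) (hn : 1 ≤ n) :
    |∑ k ∈ Finset.Icc 1 n, vonMangoldt k / k - Real.log n| ≤ Real.log 4 + 5 := by
  have hn0 : (0:ℝ) < n := by exact_mod_cast hn
  have key : ∑ k ∈ Finset.Icc 1 n, vonMangoldt k * ((n / k : ℕ) : ℝ) = Real.log (n.factorial) := by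
    have h1 : Real.log (n.factorial) = ∑ m ∈ Finset.Icc 1 n, Real.log m := by
      rw [← Finset.prod_Ico_id_eq_factorial, show Finset.Ico 1 (n + 1) = Finset.Icc 1 n from rfl]
      push_cast
      rw [Real.log_prod]
      intro i hi
      simp at hi
      have : i ≠ 0 := by lia
      exact_mod_cast this
    rw [h1]
    simp_rw [← vonMangoldt_sum]
    have h2 : ∀ m ∈ Finset.Icc 1 n, ∑ i ∈ m.divisors, vonMangoldt i =
        ∑ i ∈ Finset.Icc 1 n, if i ∣ m then vonMangoldt i else 0 := by
      intro m hm
      rw [← Finset.sum_filter]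
      refine Finset.sum_congr ?_ fun _ _ => rfl
      ext i
      simp at hm ⊢
      constructor
      · rintro ⟨h, h'⟩
        have := Nat.le_of_dvd (by lia) h
        have := Nat.pos_of_dvd_of_pos h (by lia)
        exact ⟨⟨by lia, by lia⟩, h⟩
      · rintro ⟨h, h'⟩
        exact ⟨h', by lia⟩
    rw [Finset.sum_congr rfl h2, Finset.sum_comm]
    refine Finset.sum_congr rfl fun k hk => ?_
    rw [← Finset.sum_filter, Finset.sum_const, nsmul_eq_mul, mul_comm]
    congr 2
    have := Nat.Ioc_filter_dvd_card_eq_div n k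
    rw [← this]
    rfl
  have hpsi : ∑ k ∈ Finset.Icc 1 n, vonMangoldt k ≤ (Real.log 4 + 4) * n := by
    have := Chebyshev.psi_le_const_mul_self (x := n) hn0.le
    rw [Chebyshev.psi, Nat.floor_natCast] at this
    exact this
  have hup : ∑ k ∈ Finset.Icc 1 n, vonMangoldt k * ((n / k : ℕ) : ℝ) ≤
      n * ∑ k ∈ Finset.Icc 1 n, vonMangoldt k / k := by
    rw [Finset.mul_sum]
    refine Finset.sum_le_sum fun k hk => ?_
    have : ((n / k : ℕ) : ℝ) ≤ n / k := Nat.cast_div_le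
    calc _ ≤ vonMangoldt k * ((n:ℝ) / k) := by gcongr
      _ = _ := by ring
  have hlo : n * ∑ k ∈ Finset.Icc 1 n, vonMangoldt k / k ≤
      ∑ k ∈ Finset.Icc 1 n, vonMangoldt k * ((n / k : ℕ) : ℝ) +
        ∑ k ∈ Finset.Icc 1 n, vonMangoldt k := by
    rw [Finset.mul_sum, ← Finset.sum_add_distrib]
    refine Finset.sum_le_sum fun k hk => ?_
    have h := Nat.lt_floor_add_one ((n:ℝ) / k)
    rw [Nat.floor_div_natCast, Nat.floor_natCast] at h
    calc _ = vonMangoldt k * ((n:ℝ) / k) := by ring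
      _ ≤ vonMangoldt k * (((n / k : ℕ) : ℝ) + 1) := by gcongr
      _ = _ := by ring
  have hf1 : Real.log (n.factorial) ≤ n * Real.log n := by
    rw [← Real.log_pow]
    apply Real.log_le_log (by exact_mod_cast n.factorial_pos)
    exact_mod_cast Nat.factorial_le_pow n
  have hf2 : n * Real.log n - n ≤ Real.log (n.factorial) := by
    have h : (n:ℝ) ^ n / n.factorial ≤ Real.exp n := Real.pow_div_factorial_le_exp _ hn0.le n
    have := Real.log_le_log (by positivity) h
    rw [Real.log_exp, Real.log_div (by positivity) (by positivity), Real.log_pow] at this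
    linarith
  rw [key] at hup hlo
  have l4 : 0 ≤ Real.log 4 := Real.log_nonneg (by norm_num)
  rw [abs_le]
  constructor
  · refine le_of_mul_le_mul_left ?_ hn0
    nlinarith
  · refine le_of_mul_le_mul_left ?_ hn0
    nlinarith


noncomputable def Asum (n : ℕ) : ℝ := ∑ k ∈ Finset.Icc 1 n, ArithmeticFunction.vonMangoldt k / k

noncomputable def aFun (u : ℝ) : ℝ := Asum ⌊Real.exp u⌋₊ - u + Real.eulerMascheroniConstant

lemma Asum_mono : Monotone Asum := by
  intro m n h
  unfold Asum
  refine Finset.sum_le_sum_of_subset_of_nonneg (Finset.Icc_subset_Icc_right h) ?_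
  intro i _ _
  exact div_nonneg ArithmeticFunction.vonMangoldt_nonneg (by positivity)

lemma aFun_slow (u v : ℝ) (h : u ≤ v) : aFun u - (v - u) ≤ aFun v := by
  unfold aFun
  have := Asum_mono (Nat.floor_mono (Real.exp_le_exp.2 h))
  linarith

lemma aFun_meas : Measurable aFun := by
  unfold aFun
  have : Measurable fun u => Asum ⌊Real.exp u⌋₊ :=
    (measurable_of_countable Asum).comp (Nat.measurable_floor.comp Real.measurable_exp)
  fun_prop

lemma aFun_bdd : ∃ M, ∀ u, 0 ≤ u → |aFun u| ≤ M := by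
  refine ⟨(Real.log 4 + 5) + Real.log 2 + |Real.eulerMascheroniConstant|, fun u hu => ?_⟩
  have h1 : 1 ≤ Real.exp u := Real.one_le_exp hu
  have hf : 1 ≤ ⌊Real.exp u⌋₊ := (Nat.one_le_floor_iff _).2 h1
  have hm := mertens_aux _ hf
  have hf' : (1:ℝ) ≤ ⌊Real.exp u⌋₊ := by exact_mod_cast hf
  have hle : (⌊Real.exp u⌋₊ : ℝ) ≤ Real.exp u := Nat.floor_le (by positivity)
  have hlt := Nat.lt_floor_add_one (Real.exp u)
  have h2 : Real.log ⌊Real.exp u⌋₊ ≤ u := by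
    have := Real.log_le_log (by positivity) hle
    simpa using this
  have h3 : u ≤ Real.log 2 + Real.log ⌊Real.exp u⌋₊ := by
    rw [← Real.log_mul (by norm_num) (by positivity)]
    have := Real.log_le_log (by positivity) (show Real.exp u ≤ 2 * ⌊Real.exp u⌋₊ by linarith)
    simpa using this
  have h4 := le_abs_self Real.eulerMascheroniConstant
  have h5 := neg_abs_le Real.eulerMascheroniConstant
  have h6 : 0 ≤ Real.log 2 := Real.log_nonneg (by norm_num)
  unfold aFun Asum
  rw [abs_le] at hm ⊢
  constructor <;> linarith

lemma Asum_bigO {r : ℝ} (hr : 0 < r) :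
    (fun n : ℕ => ∑ k ∈ Finset.Icc 1 n, ArithmeticFunction.vonMangoldt k / k)
      =O[atTop] fun n => (n : ℝ) ^ r := by
  have h1 : (fun n : ℕ => Real.log n) =O[atTop] fun n => (n : ℝ) ^ r :=
    ((isLittleO_log_rpow_atTop hr).comp_tendsto tendsto_natCast_atTop_atTop).isBigO
  have h2 : (fun n : ℕ => ∑ k ∈ Finset.Icc 1 n, ArithmeticFunction.vonMangoldt k / k - Real.log n)
      =O[atTop] fun n => (n : ℝ) ^ r := by
    refine Asymptotics.IsBigO.of_bound (Real.log 4 + 5) ?_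
    filter_upwards [eventually_ge_atTop 1] with n hn
    refine (mertens_aux n hn).trans ?_
    have l4 : 0 ≤ Real.log 4 := Real.log_nonneg (by norm_num)
    have : 1 ≤ ‖(n:ℝ) ^ r‖ := by
      rw [Real.norm_of_nonneg (by positivity)]
      exact Real.one_le_rpow (by exact_mod_cast hn) hr.le
    nlinarith
  simpa using h2.add h1

lemma LSeries_shift (s : ℂ) :
    LSeries (fun n => ((ArithmeticFunction.vonMangoldt n / n : ℝ) : ℂ)) s =
    LSeries (fun n => (ArithmeticFunction.vonMangoldt n : ℂ)) (s + 1) := by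
  unfold LSeries
  refine tsum_congr fun n => ?_
  by_cases hn : n = 0
  · simp [hn]
  · have : (n:ℂ) ≠ 0 := by exact_mod_cast hn
    rw [LSeries.term_of_ne_zero hn, LSeries.term_of_ne_zero hn, cpow_add _ _ this, cpow_one]
    push_cast
    field_simp

lemma laplace_subst (F : ℝ → ℂ) (s : ℂ) :
    ∫ t in Ioi (1:ℝ), F t * (t:ℂ) ^ (-(s + 1)) = ∫ u in Ioi (0:ℝ), F (Real.exp u) * cexp (-s * u) := by
  have himg : Real.exp '' Ioi 0 = Ioi 1 := by
    ext x
    simp only [mem_image, mem_Ioi]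
    constructor
    · rintro ⟨y, hy, rfl⟩; exact Real.one_lt_exp_iff.2 hy
    · intro hx; exact ⟨Real.log x, Real.log_pos hx, Real.exp_log (by linarith)⟩
  rw [← himg, integral_image_eq_integral_abs_deriv_smul measurableSet_Ioi
    (fun x _ => (Real.hasDerivAt_exp x).hasDerivWithinAt) Real.exp_injective.injOn]
  refine setIntegral_congr_fun measurableSet_Ioi fun u _ => ?_
  simp only [abs_of_pos (Real.exp_pos u), real_smul]
  rw [cpow_def_of_ne_zero (by exact_mod_cast (Real.exp_pos u).ne'), ← ofReal_log (Real.exp_pos u).le,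
    Real.log_exp, ofReal_exp]
  rw [mul_left_comm, ← Complex.exp_add]
  congr 2
  ring

lemma aFun_laplace_integrable {s : ℂ} (hs : 0 < s.re) :
    IntegrableOn (fun u : ℝ => (aFun u : ℂ) * cexp (-s * u)) (Ioi 0) := by
  obtain ⟨M, hM⟩ := aFun_bdd
  have h0 : IntegrableOn (fun u : ℝ => cexp (-s * u)) (Ioi 0) :=
    integrableOn_exp_mul_complex_Ioi (by simpa using hs) 0
  refine Integrable.bdd_mul (c := M) h0 ?_ ?_
  · exact (measurable_ofReal.comp aFun_meas).aestronglyMeasurable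
  · refine (ae_restrict_iff' measurableSet_Ioi).2 (ae_of_all _ fun u hu => ?_)
    rw [norm_real]
    exact hM u (le_of_lt hu)

lemma id_laplace_integrable {s : ℂ} (hs : 0 < s.re) :
    IntegrableOn (fun u : ℝ => (u:ℂ) * cexp (-s * u)) (Ioi 0) := by
  have h1 : IntegrableOn (fun u : ℝ => u ^ ((2:ℝ) - 1) * Real.exp (-(s.re * u))) (Ioi 0) := by
    refine Integrable.of_integral_ne_zero ?_
    rw [Real.integral_rpow_mul_exp_neg_mul_Ioi (by norm_num) hs]
    have := Real.Gamma_pos_of_pos (s := 2) (by norm_num)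
    positivity
  refine Integrable.mono' h1 (by fun_prop) ?_
  refine (ae_restrict_iff' measurableSet_Ioi).2 (ae_of_all _ fun u hu => ?_)
  have : (2:ℝ) - 1 = 1 := by norm_num
  rw [this, Real.rpow_one, norm_mul, norm_real, Complex.norm_exp, Real.norm_of_nonneg (le_of_lt hu)]
  simp

lemma id_laplace {s : ℂ} (hs : 0 < s.re) :
    ∫ u in Ioi (0:ℝ), (u:ℂ) * cexp (-s * u) = 1 / s ^ 2 := by
  have hs0 : s ≠ 0 := by rintro rfl; simp at hs
  have ht (n : ℕ) : Tendsto (fun u : ℝ => (u:ℂ) ^ n * cexp (-s * u)) atTop (𝓝 0) := by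
    rw [tendsto_zero_iff_norm_tendsto_zero]
    have := tendsto_rpow_mul_exp_neg_mul_atTop_nhds_zero n s.re hs
    refine this.congr' ?_
    filter_upwards [eventually_ge_atTop 0] with u hu
    rw [norm_mul, norm_pow, norm_real, Complex.norm_exp, Real.norm_of_nonneg hu]
    simp
  have := integral_Ioi_of_hasDerivAt_of_tendsto' (a := 0)
    (f := fun u : ℝ => -(1 / s) * ((u:ℂ) ^ 1 * cexp (-s * u)) - (1 / s ^ 2) * ((u:ℂ) ^ 0 * cexp (-s * u)))
    (f' := fun u : ℝ => (u:ℂ) * cexp (-s * u)) (m := -(1 / s) * 0 - (1 / s ^ 2) * 0) ?_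
    (id_laplace_integrable hs) (((ht 1).const_mul _).sub ((ht 0).const_mul _))
  · rw [this]; simp
  · intro u _
    have h0 : HasDerivAt (fun u : ℝ => (u:ℂ)) 1 u := Complex.ofRealCLM.hasDerivAt
    have h1 := (h0.const_mul (-s)).cexp
    have h2 := ((h0.mul h1).const_mul (-(1 / s))).sub (h1.const_mul (1 / s ^ 2))
    simp only [pow_one, pow_zero, one_mul]
    convert! h2 using 1
    field_simp
    ring

lemma aFun_laplace {H : ℂ → ℂ} (hH : ∀ s : ℂ, 0 < s.re →
    LSeries (fun n => (ArithmeticFunction.vonMangoldt n : ℂ)) (s + 1) =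
      1 / s - Real.eulerMascheroniConstant + s * H s) {s : ℂ} (hs : 0 < s.re) :
    ∫ u in Ioi (0:ℝ), (aFun u : ℂ) * cexp (-s * u) = H s := by
  have hs0 : s ≠ 0 := by rintro rfl; simp at hs
  have h1 := LSeries_eq_mul_integral_of_nonneg
    (fun n => ArithmeticFunction.vonMangoldt n / n) (r := s.re / 2) (by linarith) (s := s)
    (by linarith) (Asum_bigO (by linarith))
    (fun n => div_nonneg ArithmeticFunction.vonMangoldt_nonneg (by positivity))
  rw [LSeries_shift, hH s hs] at h1
  have h2 := laplace_subst (fun t => ((Asum ⌊t⌋₊ : ℝ) : ℂ)) s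
  simp only [Asum, ofReal_sum] at h2
  rw [h2] at h1
  have j1 := id_laplace_integrable hs
  have i1 := id_laplace hs
  have j0 : IntegrableOn (fun u : ℝ => cexp (-s * u)) (Ioi 0) :=
    integrableOn_exp_mul_complex_Ioi (by simpa using hs) 0
  have i0 : ∫ u in Ioi (0:ℝ), cexp (-s * u) = 1 / s := by
    rw [integral_exp_mul_complex_Ioi (by simpa using hs)]
    simp; try field_simp
  have ja := aFun_laplace_integrable hs
  have e : ∫ u in Ioi (0:ℝ), (∑ k ∈ Finset.Icc 1 ⌊Real.exp u⌋₊,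
        ((ArithmeticFunction.vonMangoldt k / k : ℝ) : ℂ)) * cexp (-s * u) =
      (∫ u in Ioi (0:ℝ), (aFun u : ℂ) * cexp (-s * u)) + 1 / s ^ 2
        - Real.eulerMascheroniConstant * (1 / s) := by
    rw [← i1, ← i0, ← integral_const_mul, ← integral_add ja j1,
      ← integral_sub (f := fun u : ℝ => (aFun u : ℂ) * cexp (-s * u) + (u:ℂ) * cexp (-s * u)) (ja.add j1) (j0.const_mul _)]
    refine integral_congr_ae (ae_of_all _ fun u => ?_)
    simp only [aFun, Asum, Pi.add_apply]
    push_cast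
    ring
  rw [e] at h1
  field_simp at h1
  have h3 : s ^ 2 * (∫ u in Ioi (0:ℝ), (aFun u : ℂ) * cexp (-s * u)) = s ^ 2 * H s := by
    simp only [neg_mul] at h1 ⊢
    linear_combination -h1
  exact mul_left_cancel₀ (pow_ne_zero 2 hs0) h3


noncomputable def npFun (n : ℕ) : ℝ :=
  (if n.Prime then 0 else ArithmeticFunction.vonMangoldt n) / n

lemma npFun_summable : Summable npFun := by
  have h := ArithmeticFunction.vonMangoldt.summable_residueClass_non_primes_div (q := 1) 0
  refine h.congr fun n => ?_
  unfold npFun ArithmeticFunction.vonMangoldt.residueClass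
  have : (n : ZMod 1) = 0 := Subsingleton.elim _ _
  simp [Set.indicator, this]

lemma npFun_pow (p : Nat.Primes) (k : ℕ) :
    npFun ((p:ℕ) ^ (k + 2)) = Real.log (p : ℕ) / ((p : ℕ) : ℝ) ^ (k + 2) := by
  unfold npFun
  rw [if_neg (Nat.Prime.not_prime_pow (by lia)),
    ArithmeticFunction.vonMangoldt_apply_pow (by lia),
    ArithmeticFunction.vonMangoldt_apply_prime p.2]
  push_cast
  rfl

lemma pp_summable' : Summable (fun pk : Nat.Primes × ℕ =>
      Real.log (pk.1 : ℕ) / ((pk.1 : ℕ) : ℝ) ^ (pk.2 + 2)) := by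
  have := npFun_summable.comp_injective (i := fun (pk : Nat.Primes × ℕ) => (pk.1 : ℕ) ^ (pk.2 + 2))
    (Subtype.val_injective.comp Nat.Primes.prodNatEquiv.injective |>.comp <|
    Function.Injective.prodMap (fun ⦃_ _⦄ ↦ id) <| add_left_injective 1)
  refine this.congr fun pk => ?_
  exact npFun_pow pk.1 pk.2

lemma pp_summable : Summable (fun kp : ℕ × Nat.Primes =>
      Real.log (kp.2 : ℕ) / ((kp.2 : ℕ) : ℝ) ^ (kp.1 + 2)) :=
  (Equiv.prodComm ℕ Nat.Primes).summable_iff.2 pp_summable'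

lemma npFun_tsum : ∑' n, npFun n =
    ∑' (k : ℕ) (p : Nat.Primes), Real.log (p : ℕ) / ((p : ℕ) : ℝ) ^ (k + 2) := by
  rw [tsum_eq_tsum_primes_add_tsum_primes_of_support_subset_prime_powers npFun_summable]
  · have h0 : ∀ p : Nat.Primes, npFun p = 0 := fun p => by simp [npFun, p.2]
    simp only [h0, tsum_zero, zero_add, npFun_pow]
    exact pp_summable'.tsum_comm.symm
  · intro n hn
    by_contra h
    apply hn
    have : ArithmeticFunction.vonMangoldt n = 0 := ArithmeticFunction.vonMangoldt_eq_zero_iff.2 h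
    simp [npFun, this]

lemma prime_sum_eq (n : ℕ) :
    ∑ p ∈ (Finset.range (n + 1)).filter Nat.Prime, Real.log p / p =
      Asum n - ∑ k ∈ Finset.range (n + 1), npFun k := by
  have : Asum n = ∑ k ∈ Finset.range (n + 1), ArithmeticFunction.vonMangoldt k / k := by
    unfold Asum
    refine Finset.sum_subset ?_ ?_
    · intro i hi; simp at hi ⊢; lia
    · intro i hi h
      have : i = 0 := by simp at hi h; lia
      simp [this]
  rw [this, ← Finset.sum_sub_distrib, Finset.sum_filter]
  refine Finset.sum_congr rfl fun k _ => ?_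
  unfold npFun
  split_ifs with h
  · rw [ArithmeticFunction.vonMangoldt_apply_prime h]; simp
  · simp

lemma RFun_eq {x : ℝ} (hx : 0 < x) : aFun (Real.log x) - Real.eulerMascheroniConstant -
    ∑ k ∈ Finset.range (⌊x⌋₊ + 1), npFun k = RFun x := by
  unfold RFun
  rw [prime_sum_eq]
  unfold aFun
  rw [Real.exp_log hx]
  ring

end

/-- `R(x)` converges as `x → ∞`, with limit
`−γ − ∑_{k ≥ 2} ∑_{p prime} (log p)/p^k`; the double series converges absolutely. -/
theorem RFun_tendsto_neg_gamma_sub :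
    Summable (fun kp : ℕ × Nat.Primes =>
      Real.log (kp.2 : ℕ) / ((kp.2 : ℕ) : ℝ) ^ (kp.1 + 2)) ∧
    Filter.Tendsto RFun Filter.atTop
      (nhds (-Real.eulerMascheroniConstant -
        ∑' (k : ℕ) (p : Nat.Primes), Real.log (p : ℕ) / ((p : ℕ) : ℝ) ^ (k + 2))) := by
  refine ⟨pp_summable, ?_⟩
  obtain ⟨H, hHc, hH⟩ := zeta_piece
  obtain ⟨M, hM⟩ := aFun_bdd
  have ht : Filter.Tendsto aFun Filter.atTop (nhds 0) :=
    tauberian aFun_meas hM aFun_slow hHc (fun s hs => aFun_laplace hH hs)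
  have h1 := ht.comp Real.tendsto_log_atTop
  have h2 := npFun_summable.hasSum.tendsto_sum_nat.comp
    ((Filter.tendsto_add_atTop_nat 1).comp (tendsto_nat_floor_atTop (α := ℝ)))
  rw [npFun_tsum] at h2
  have h3 := (h1.sub_const Real.eulerMascheroniConstant).sub h2
  rw [zero_sub] at h3
  refine h3.congr' ?_
  filter_upwards [Filter.eventually_gt_atTop 0] with x hx
  exact RFun_eq hx
end

section
/- As x → ∞, the function Σ_{n ≤ x} Λ(n)/n − log x converges to −γ, where Λ is the von Mangoldt function and γ is the Euler–Mascheroni constant. -/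
open Real Filter Topology MeasureTheory FourierTransform
lemma exists_kernel : ∃ φ : ℝ → ℂ, Continuous φ ∧ HasCompactSupport φ ∧ Integrable (𝓕 φ) ∧
    Integrable (fun t => |t| * ‖𝓕 φ t‖) ∧ Continuous (𝓕 φ) ∧ ∫ t, 𝓕 φ t = 1 := by
  let b : ContDiffBump (0:ℝ) := ⟨1, 2, by norm_num, by norm_num⟩
  let φ : ℝ → ℂ := fun x => (b x : ℂ)
  have h1 : HasCompactSupport φ := b.hasCompactSupport.comp_left (g := fun x : ℝ => (x:ℂ)) (by simp)
  have h2 : ContDiff ℝ ((⊤ : ℕ∞) : WithTop ℕ∞) φ := Complex.ofRealCLM.contDiff.comp b.contDiff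
  let Φ := h1.toSchwartzMap h2
  have hΦ : (Φ : ℝ → ℂ) = φ := rfl
  have hK : ((𝓕 Φ : SchwartzMap ℝ ℂ) : ℝ → ℂ) = 𝓕 φ := by rw [SchwartzMap.fourier_coe, hΦ]
  have hint : Integrable (𝓕 φ) := by rw [← hK]; exact (𝓕 Φ).integrable
  refine ⟨φ, h2.continuous, h1, hint, ?_, ?_, ?_⟩
  · have := (𝓕 Φ).integrable_pow_mul volume 1
    simpa [hK] using this
  · rw [← hK]; exact (𝓕 Φ).continuous
  · have hφi : Integrable φ := Φ.integrable
    have := congrFun (h2.continuous.fourierInv_fourier_eq hφi hint) 0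
    rw [Real.fourierInv_eq] at this
    have hb : φ 0 = 1 := by
      have : b 0 = 1 := b.one_of_mem_closedBall (by simp [b.rIn_pos.le])
      simp [φ, this]
    rw [hb] at this
    simpa using this

lemma integrable_damped {h : ℝ → ℂ} {M : ℝ} (hc : Continuous h) (h0 : ∀ t ≤ 0, h t = 0)
    (hM : ∀ t, ‖h t‖ ≤ M * |t|) {z : ℂ} (hz : 0 < z.re) :
    Integrable (fun t : ℝ => h t * Complex.exp (-z * t)) := by
  have hM0 : 0 ≤ M := by have := (norm_nonneg _).trans (hM 1); simpa using this
  have h1 : IntegrableOn (fun t : ℝ => h t * Complex.exp (-z * t)) (Set.Ioi 0) := by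
    refine Integrable.mono' (((exp_neg_integrableOn_Ioi 0 (half_pos hz)).const_mul (M * (2 / z.re))))
      (by fun_prop) ?_
    refine (ae_restrict_iff' measurableSet_Ioi).2 (Eventually.of_forall fun t ht => ?_)
    have ht' : 0 < t := ht
    rw [norm_mul, Complex.norm_exp]
    have e1 : (-z * (t:ℂ)).re = -(z.re/2) * t + -(z.re/2) * t := by simp; ring
    rw [e1, Real.exp_add, ← mul_assoc]
    refine mul_le_mul_of_nonneg_right ?_ (Real.exp_pos _).le
    have h2 := hM t
    rw [abs_of_pos ht'] at h2
    have h3 : z.re / 2 * t * Real.exp (-(z.re/2) * t) ≤ 1 := by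
      have := Real.add_one_le_exp (z.re / 2 * t)
      rw [neg_mul, Real.exp_neg, mul_inv_le_iff₀ (Real.exp_pos _)]
      linarith
    calc ‖h t‖ * Real.exp (-(z.re/2) * t) ≤ (M * t) * Real.exp (-(z.re/2) * t) := by gcongr
      _ = M * (2 / z.re) * (z.re / 2 * t * Real.exp (-(z.re/2) * t)) := by field_simp
      _ ≤ M * (2 / z.re) * 1 := by gcongr
      _ = _ := by ring
  refine (integrableOn_iff_integrable_of_support_subset ?_).1 h1
  intro t ht
  by_contra hn
  exact ht (by simp [h0 t (not_lt.1 hn)])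

lemma smoothing_eps {φ : ℝ → ℂ} (hφ : Continuous φ) (hφs : HasCompactSupport φ)
    {h : ℝ → ℂ} {M : ℝ} (hc : Continuous h) (h0 : ∀ t ≤ 0, h t = 0)
    (hM : ∀ t, ‖h t‖ ≤ M * |t|) {H : ℂ → ℂ}
    (hH : ∀ z : ℂ, 0 < z.re → ∫ t : ℝ, h t * Complex.exp (-z * t) = H z) (u : ℝ) {ε : ℝ} (hε : 0 < ε) :
    ∫ t : ℝ, h t * Complex.exp (-(ε:ℂ) * t) * 𝓕 φ (t - u) =
      ∫ y : ℝ, φ y * Complex.exp ((2 * π * y * u : ℝ) * Complex.I) * H (ε + (2 * π * y : ℝ) * Complex.I) := by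
  have hi := integrable_damped hc h0 hM (z := ε) (by simpa using hε)
  have hφi : Integrable φ := hφ.integrable_of_hasCompactSupport hφs
  have hsw := integral_integral_swap (μ := volume) (ν := volume)
    (f := fun t y : ℝ => (h t * Complex.exp (-(ε:ℂ) * t)) *
      (Complex.exp ((-2 * π * y * (t - u) : ℝ) * Complex.I) * φ y)) (by
    refine (hi.mul_prod hφi).mono (Continuous.aestronglyMeasurable (by
      simp only [Function.uncurry_def]; fun_prop)) (Eventually.of_forall fun p => ?_)
    simp only [Function.uncurry_def, norm_mul, Complex.norm_exp_ofReal_mul_I, one_mul]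
    exact le_rfl)
  simp only [integral_const_mul] at hsw
  calc _ = _ := by
        refine integral_congr_ae (Eventually.of_forall fun t => ?_)
        simp only [Real.fourier_real_eq_integral_exp_smul, smul_eq_mul]
    _ = _ := hsw
    _ = _ := by
        refine integral_congr_ae (Eventually.of_forall fun y => ?_)
        simp only
        rw [← hH _ (by simpa using hε), ← integral_const_mul]
        refine integral_congr_ae (Eventually.of_forall fun t => ?_)
        simp only
        have : Complex.exp (-(ε:ℂ) * t) * Complex.exp ((-2 * π * y * (t - u) : ℝ) * Complex.I) =
          Complex.exp ((2 * π * y * u : ℝ) * Complex.I) *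
          Complex.exp (-(ε + (2 * π * y : ℝ) * Complex.I) * t) := by
          rw [← Complex.exp_add, ← Complex.exp_add]; congr 1; push_cast; ring
        linear_combination (h t * φ y) * this

lemma smoothing {φ : ℝ → ℂ} (hφ : Continuous φ) (hφs : HasCompactSupport φ)
    (hK : Integrable (𝓕 φ)) (hK1 : Integrable (fun t => |t| * ‖𝓕 φ t‖)) (hKc : Continuous (𝓕 φ))
    {h : ℝ → ℂ} {M : ℝ} (hc : Continuous h) (h0 : ∀ t ≤ 0, h t = 0)
    (hM : ∀ t, ‖h t‖ ≤ M * |t|) {H : ℂ → ℂ} (hHc : ContinuousOn H {z | 0 ≤ z.re})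
    (hH : ∀ z : ℂ, 0 < z.re → ∫ t : ℝ, h t * Complex.exp (-z * t) = H z) (u : ℝ) :
    ∫ t : ℝ, h t * 𝓕 φ (t - u) = 𝓕 (fun y : ℝ => φ y * H ((2 * π * y : ℝ) * Complex.I)) (-u) := by
  have hM0 : 0 ≤ M := by have := (norm_nonneg _).trans (hM 1); simpa using this
  -- left-hand limit
  have hL : Tendsto (fun ε : ℝ => ∫ t : ℝ, h t * Complex.exp (-(ε:ℂ) * t) * 𝓕 φ (t - u)) (𝓝[>] 0)
      (𝓝 (∫ t : ℝ, h t * 𝓕 φ (t - u))) := by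
    refine tendsto_integral_filter_of_dominated_convergence
      (fun t => M * (|t - u| * ‖𝓕 φ (t - u)‖ + |u| * ‖𝓕 φ (t - u)‖)) ?_ ?_ ?_ ?_
    · exact Eventually.of_forall fun ε => Continuous.aestronglyMeasurable (by fun_prop)
    · filter_upwards [self_mem_nhdsWithin] with ε hε
      have hε' : 0 < ε := hε
      refine Eventually.of_forall fun t => ?_
      rw [norm_mul, norm_mul, Complex.norm_exp, ← add_mul, ← mul_assoc]
      refine mul_le_mul_of_nonneg_right ?_ (norm_nonneg _)
      rcases le_or_gt t 0 with ht | ht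
      · rw [h0 t ht]; simp; positivity
      · have e1 : Real.exp (-(ε:ℂ) * (t:ℂ)).re ≤ 1 := by
          rw [Real.exp_le_one_iff]; simp; positivity
        have e2 : |t| ≤ |t - u| + |u| := by simpa using abs_add_le (t - u) u
        calc _ ≤ ‖h t‖ * 1 := by gcongr
          _ ≤ M * |t| := by simpa using hM t
          _ ≤ _ := by gcongr
    · exact ((hK1.comp_sub_right u).add ((hK.norm.comp_sub_right u).const_mul |u|)).const_mul M
    · refine Eventually.of_forall fun t => ?_
      have : Continuous fun ε : ℝ => h t * Complex.exp (-(ε:ℂ) * t) * 𝓕 φ (t - u) := by fun_prop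
      have := (this.tendsto 0).mono_left (nhdsWithin_le_nhds (s := Set.Ioi 0))
      simpa using this
  -- right-hand limit
  have hR : Tendsto (fun ε : ℝ => ∫ y : ℝ, φ y * Complex.exp ((2 * π * y * u : ℝ) * Complex.I) *
        H (ε + (2 * π * y : ℝ) * Complex.I)) (𝓝[>] 0)
      (𝓝 (∫ y : ℝ, φ y * Complex.exp ((2 * π * y * u : ℝ) * Complex.I) *
        H ((2 * π * y : ℝ) * Complex.I))) := by
    let G : ℝ × ℝ → ℂ := fun p => H (p.1 + (2 * π * p.2 : ℝ) * Complex.I)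
    have hG : ContinuousOn G (Set.Ici 0 ×ˢ Set.univ) := by
      refine hHc.comp (by fun_prop) ?_
      intro p hp
      simpa using hp.1
    obtain ⟨B, hB⟩ := ((isCompact_Icc (a := (0:ℝ)) (b := 1)).prod hφs).exists_bound_of_continuousOn
      (hG.mono (Set.prod_mono (fun x hx => hx.1) (Set.subset_univ _)))
    have hfib : ∀ ε : ℝ, 0 ≤ ε → Continuous fun y : ℝ => H (ε + (2 * π * y : ℝ) * Complex.I) := by
      intro ε hε
      exact hG.comp_continuous (f := fun y : ℝ => (ε, y)) (by fun_prop) (by simp [hε])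
    refine tendsto_integral_filter_of_dominated_convergence (fun y => ‖φ y‖ * B) ?_ ?_ ?_ ?_
    · filter_upwards [self_mem_nhdsWithin] with ε hε
      have := hfib ε (le_of_lt hε)
      exact Continuous.aestronglyMeasurable (Continuous.mul (by fun_prop) this)
    · filter_upwards [Ioc_mem_nhdsGT (zero_lt_one (α := ℝ))] with ε hε
      refine Eventually.of_forall fun y => ?_
      rw [norm_mul, norm_mul, Complex.norm_exp_ofReal_mul_I, mul_one]
      by_cases hy : φ y = 0
      · simp [hy]
      · exact mul_le_mul_of_nonneg_left (hB (ε, y) ⟨⟨hε.1.le, hε.2⟩, subset_tsupport _ hy⟩)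
          (norm_nonneg _)
    · exact (hφ.integrable_of_hasCompactSupport hφs).norm.mul_const B
    · refine Eventually.of_forall fun y => Tendsto.const_mul _ ?_
      have h2 : Tendsto G (𝓝[Set.Ici 0 ×ˢ Set.univ] (0, y)) (𝓝 (G (0, y))) :=
        hG (0, y) (by simp)
      have h3 : Tendsto (fun ε : ℝ => (ε, y)) (𝓝[>] 0) (𝓝[Set.Ici 0 ×ˢ Set.univ] (0, y)) := by
        refine tendsto_nhdsWithin_iff.2 ⟨?_, ?_⟩
        · have : Continuous fun ε : ℝ => (ε, y) := by fun_prop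
          exact (this.tendsto 0).mono_left nhdsWithin_le_nhds
        · filter_upwards [self_mem_nhdsWithin] with ε hε
          exact ⟨Set.mem_Ici.2 (le_of_lt (Set.mem_Ioi.1 hε)), trivial⟩
      have := h2.comp h3
      simpa [G, Function.comp_def] using this
  have heq : (fun ε : ℝ => ∫ t : ℝ, h t * Complex.exp (-(ε:ℂ) * t) * 𝓕 φ (t - u)) =ᶠ[𝓝[>] 0]
      fun ε : ℝ => ∫ y : ℝ, φ y * Complex.exp ((2 * π * y * u : ℝ) * Complex.I) *
        H (ε + (2 * π * y : ℝ) * Complex.I) := by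
    filter_upwards [self_mem_nhdsWithin] with ε hε
    exact smoothing_eps hφ hφs hc h0 hM hH u hε
  rw [tendsto_nhds_unique (hL.congr' heq) hR, Real.fourier_real_eq_integral_exp_smul]
  refine integral_congr_ae (Eventually.of_forall fun y => ?_)
  simp only [smul_eq_mul]
  rw [show (-2 * π * y * -u : ℝ) = 2 * π * y * u by ring]
  ring

/-- Tauberian theorem, approximate form. -/
lemma tauber_aux : ∃ C : ℝ, ∀ (h : ℝ → ℂ) (M : ℝ) (H : ℂ → ℂ), (∀ t ≤ 0, h t = 0) →
    (∀ a b, ‖h a - h b‖ ≤ M * |a - b|) → ContinuousOn H {z | 0 ≤ z.re} →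
    (∀ z : ℂ, 0 < z.re → ∫ t : ℝ, h t * Complex.exp (-z * t) = H z) →
    ∀ δ > 0, ∀ᶠ u in atTop, ‖h u‖ ≤ M * C + δ := by
  obtain ⟨φ, hφ, hφs, hK, hK1, hKc, hK2⟩ := exists_kernel
  refine ⟨∫ t, |t| * ‖𝓕 φ t‖, fun h M H h0 hL hHc hH δ hδ => ?_⟩
  have hM : ∀ t, ‖h t‖ ≤ M * |t| := fun t => by simpa [h0 0 le_rfl] using hL t 0
  have hM0 : 0 ≤ M := by have := (norm_nonneg _).trans (hM 1); simpa using this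
  have hc : Continuous h := by
    have : LipschitzWith ⟨M, hM0⟩ h := LipschitzWith.of_dist_le_mul fun a b => by
      rw [dist_eq_norm, Real.dist_eq]; exact hL a b
    exact this.continuous
  have hRL := Real.zero_at_infty_fourier (fun y : ℝ => φ y * H ((2 * π * y : ℝ) * Complex.I))
  have hneg : Tendsto (fun u : ℝ => -u) atTop (cocompact ℝ) :=
    tendsto_neg_atTop_atBot.mono_right atBot_le_cocompact
  have := (hRL.comp hneg).norm
  rw [norm_zero] at this
  filter_upwards [this.eventually_lt_const hδ] with u hu
  simp only [Function.comp] at hu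
  rw [← smoothing hφ hφs hK hK1 hKc hc h0 hM hHc hH u] at hu
  have hKu := hK.comp_sub_right u
  have hK1u := hK1.comp_sub_right u
  have i1 : Integrable fun t => h u * 𝓕 φ (t - u) := hKu.const_mul _
  have i3 : Integrable fun t => (h u - h t) * 𝓕 φ (t - u) := by
    refine (hK1u.const_mul M).mono' (Continuous.aestronglyMeasurable (by fun_prop))
      (Eventually.of_forall fun t => ?_)
    rw [norm_mul, ← mul_assoc, abs_sub_comm t u]
    exact mul_le_mul_of_nonneg_right (hL u t) (norm_nonneg _)
  have i2 : Integrable fun t => h t * 𝓕 φ (t - u) := by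
    refine (i1.sub i3).congr (Eventually.of_forall fun t => ?_)
    simp only [Pi.sub_apply]; ring
  have e1 : h u = ∫ t, h u * 𝓕 φ (t - u) := by
    rw [integral_const_mul, integral_sub_right_eq_self (𝓕 φ) u, hK2, mul_one]
  have e2 : h u = (∫ t, (h u - h t) * 𝓕 φ (t - u)) + ∫ t, h t * 𝓕 φ (t - u) := by
    rw [← integral_add i3 i2]
    refine e1.trans (integral_congr_ae (Eventually.of_forall fun t => ?_))
    simp only; ring
  have e3 : ‖∫ t, (h u - h t) * 𝓕 φ (t - u)‖ ≤ M * ∫ t, |t| * ‖𝓕 φ t‖ := by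
    rw [← integral_sub_right_eq_self (fun t => |t| * ‖𝓕 φ t‖) u, ← integral_const_mul]
    refine norm_integral_le_of_norm_le (hK1u.const_mul M) (Eventually.of_forall fun t => ?_)
    rw [norm_mul, ← mul_assoc, abs_sub_comm t u]
    exact mul_le_mul_of_nonneg_right (hL u t) (norm_nonneg _)
  rw [e2]
  exact (norm_add_le _ _).trans (add_le_add e3 hu.le)

/-- Tauberian theorem for Lipschitz functions. -/
lemma tauber (h : ℝ → ℂ) (M : ℝ) (H : ℂ → ℂ) (h0 : ∀ t ≤ 0, h t = 0)
    (hL : ∀ a b, ‖h a - h b‖ ≤ M * |a - b|) (hHc : ContinuousOn H {z | 0 ≤ z.re})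
    (hH : ∀ z : ℂ, 0 < z.re → ∫ t : ℝ, h t * Complex.exp (-z * t) = H z) :
    Tendsto h atTop (𝓝 0) := by
  obtain ⟨C, hC⟩ := tauber_aux
  rw [Metric.tendsto_nhds]
  intro ε hε
  have hl : Tendsto (fun l : ℝ => M / l * C) atTop (𝓝 0) := by
    simpa using (tendsto_const_nhds (x := M)).div_atTop tendsto_id |>.mul_const C
  obtain ⟨l, hl1, hl2⟩ := ((hl.eventually_lt_const (half_pos hε)).and (eventually_gt_atTop 0)).exists
  have key := hC (fun t => h (t / l)) (M / l) (fun z => l * H (l * z))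
    (fun t ht => h0 _ (div_nonpos_of_nonpos_of_nonneg ht hl2.le))
    (fun a b => by
      refine (hL _ _).trans_eq ?_
      rw [← sub_div, abs_div, abs_of_pos hl2]; ring)
    (by
      refine continuousOn_const.mul (hHc.comp (by fun_prop) ?_)
      intro z hz
      simp only [Set.mem_ofPred_eq, Complex.re_ofReal_mul] at hz ⊢
      positivity)
    (fun z hz => by
      rw [← hH (l * z) (by simp only [Complex.re_ofReal_mul]; positivity)]
      have := Measure.integral_comp_div (fun t : ℝ => h t * Complex.exp (-(l * z) * t)) l
      rw [abs_of_pos hl2, Complex.real_smul] at this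
      rw [← this]
      refine integral_congr_ae (Eventually.of_forall fun t => ?_)
      have hl' : (l:ℂ) ≠ 0 := by exact_mod_cast hl2.ne'
      simp only
      congr 2
      push_cast
      field_simp)
    (ε / 2 / 2) (by positivity)
  have ht : Tendsto (fun u : ℝ => u * l) atTop atTop := tendsto_id.atTop_mul_const hl2
  filter_upwards [ht.eventually key] with u hu
  rw [mul_div_cancel_right₀ _ hl2.ne'] at hu
  rw [dist_zero_right]
  linarith

lemma laplace_primitive {F : ℝ → ℂ} {M : ℝ} (hF : Measurable F) (h0 : ∀ t ≤ 0, F t = 0)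
    (hM : ∀ t, ‖F t‖ ≤ M) {z : ℂ} (hz : 0 < z.re) :
    ∫ t : ℝ, (∫ s in (0:ℝ)..t, F s) * Complex.exp (-z * t) =
      (∫ t : ℝ, F t * Complex.exp (-z * t)) / z := by
  have hM0 : 0 ≤ M := (norm_nonneg _).trans (hM 0)
  let K : ℝ → ℝ → ℂ := fun t s => if s < t then F s * Complex.exp (-z * t) else 0
  have hE : Integrable ((Set.Ioi (0:ℝ)).indicator fun t => Real.exp (-(z.re / 2) * t)) :=
    (integrable_indicator_iff measurableSet_Ioi).2 (exp_neg_integrableOn_Ioi 0 (half_pos hz))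
  have hint : Integrable (Function.uncurry K) (volume.prod volume) := by
    refine ((hE.mul_prod hE).const_mul M).mono' (Measurable.aestronglyMeasurable ?_)
      (Eventually.of_forall fun p => ?_)
    · refine Measurable.ite (measurableSet_lt measurable_snd measurable_fst) ?_ measurable_const
      exact (hF.comp measurable_snd).mul (by fun_prop)
    · obtain ⟨t, s⟩ := p
      have hnn : ∀ x, 0 ≤ (Set.Ioi (0:ℝ)).indicator (fun t => Real.exp (-(z.re / 2) * t)) x :=
        fun x => Set.indicator_nonneg (fun _ _ => (Real.exp_pos _).le) _
      simp only [Function.uncurry_apply_pair, K]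
      split_ifs with hst
      · rcases le_or_gt s 0 with hs | hs
        · rw [h0 s hs, zero_mul, norm_zero]
          exact mul_nonneg hM0 (mul_nonneg (hnn _) (hnn _))
        · rw [Set.indicator_of_mem (Set.mem_Ioi.2 hs), Set.indicator_of_mem (Set.mem_Ioi.2 (hs.trans hst)),
            norm_mul, ← Real.exp_add, Complex.norm_exp]
          refine mul_le_mul (hM s) (Real.exp_le_exp.2 ?_) (Real.exp_pos _).le hM0
          simp
          nlinarith
      · rw [norm_zero]
        exact mul_nonneg hM0 (mul_nonneg (hnn _) (hnn _))
  have hsw := integral_integral_swap hint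
  have hl : ∀ t, ∫ s, K t s = (∫ s in (0:ℝ)..t, F s) * Complex.exp (-z * t) := by
    intro t
    have : ∀ s, K t s = (Set.Iio t).indicator (fun s => F s * Complex.exp (-z * t)) s := by
      intro s; simp [K, Set.indicator_apply]
    simp_rw [this]
    rw [integral_indicator measurableSet_Iio, integral_mul_const]
    congr 1
    rcases le_or_gt t 0 with ht | ht
    · rw [intervalIntegral.integral_of_ge ht, setIntegral_eq_zero_of_forall_eq_zero,
        setIntegral_eq_zero_of_forall_eq_zero, neg_zero]
      · exact fun x hx => h0 x hx.2
      · exact fun x hx => h0 x ((le_of_lt hx).trans ht)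
    · rw [intervalIntegral.integral_of_le ht.le, integral_Ioc_eq_integral_Ioo]
      refine setIntegral_eq_of_subset_of_forall_sdiff_eq_zero measurableSet_Iio
        (fun x hx => hx.2) ?_
      intro x hx
      refine h0 x ?_
      by_contra hn
      exact hx.2 ⟨not_le.1 hn, hx.1⟩
  have hr : ∀ s, ∫ t, K t s = F s * Complex.exp (-z * s) / z := by
    intro s
    have : ∀ t, K t s = (Set.Ioi s).indicator (fun t : ℝ => F s * Complex.exp (-z * t)) t := by
      intro s; simp [K, Set.indicator_apply]
    simp_rw [this]
    rw [integral_indicator measurableSet_Ioi, integral_const_mul,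
      integral_exp_mul_complex_Ioi (by simpa using hz)]
    rw [neg_div_neg_eq, mul_div_assoc]
  simp_rw [hl, hr] at hsw
  rw [hsw, integral_div]

/-- Logarithmic derivative of the entire function built from zeta. -/
noncomputable def qz (s : ℂ) : ℂ := deriv riemannZeta₁ s / riemannZeta₁ s

lemma zeta1_ne {s : ℂ} (hs : 1 ≤ s.re) : riemannZeta₁ s ≠ 0 := by
  rcases eq_or_ne s 1 with rfl | h1
  · simp
  · have := riemannZeta_ne_zero_of_one_le_re hs
    rw [riemannZeta_eq_inv_sub_mul h1] at this
    exact right_ne_zero_of_mul this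

lemma qz_diff {s : ℂ} (hs : 1 ≤ s.re) : DifferentiableAt ℂ qz s :=
  (differentiable_riemannZeta₁.deriv s).div (differentiable_riemannZeta₁ s) (zeta1_ne hs)

lemma qz_one : qz 1 = (Real.eulerMascheroniConstant : ℂ) := by simp [qz]

lemma LSeries_vM {s : ℂ} (hs : 1 < s.re) :
    LSeries (fun n => (ArithmeticFunction.vonMangoldt n : ℂ)) s = (s - 1)⁻¹ - qz s := by
  have h1 : s ≠ 1 := by rintro rfl; simp at hs
  have h2 := sub_ne_zero_of_ne h1
  have h3 := zeta1_ne hs.le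
  rw [ArithmeticFunction.LSeries_vonMangoldt_eq_deriv_riemannZeta_div hs,
    deriv_riemannZeta_eq_neg_inv_sub_sq_mul_add h1, riemannZeta_eq_inv_sub_mul h1, qz]
  field_simp
  ring

/-- `ψ(e^t) e^{-t}`. -/
noncomputable def Aps (t : ℝ) : ℝ := Chebyshev.psi (Real.exp t) * Real.exp (-t)

lemma Aps_meas : Measurable Aps :=
  (Chebyshev.psi_mono.measurable.comp Real.measurable_exp).mul (by fun_prop)

lemma Aps_nonneg (t : ℝ) : 0 ≤ Aps t := mul_nonneg (Chebyshev.psi_nonneg _) (Real.exp_pos _).le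

lemma Aps_le (t : ℝ) : Aps t ≤ Real.log 4 + 4 := by
  have := Chebyshev.psi_le_const_mul_self (Real.exp_pos t).le
  rw [Aps, Real.exp_neg, mul_inv_le_iff₀ (Real.exp_pos t)]
  exact this

lemma change_var (S : Set ℝ) (hS : MeasurableSet S) (g : ℝ → ℂ) :
    ∫ x in Real.exp '' S, g x = ∫ t in S, (Real.exp t : ℂ) * g (Real.exp t) := by
  have := integral_image_eq_integral_abs_deriv_smul (f := Real.exp) (f' := Real.exp) hS
    (fun x _ => (Real.hasDerivAt_exp x).hasDerivWithinAt) Real.exp_injective.injOn g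
  rw [this]
  refine integral_congr_ae (Eventually.of_forall fun t => ?_)
  simp [abs_of_pos (Real.exp_pos t)]

lemma laplace_Aps {z : ℂ} (hz : 0 < z.re) :
    ∫ t in Set.Ioi (0:ℝ), (Aps t : ℂ) * Complex.exp (-z * t) = (z⁻¹ - qz (z + 1)) / (z + 1) := by
  have hs : 1 < (z + 1).re := by simpa using hz
  have hz1 : z + 1 ≠ 0 := by intro h; rw [h] at hs; norm_num at hs
  have h1 := LSeries_eq_mul_integral_of_nonneg (fun n => ArithmeticFunction.vonMangoldt n)
    (r := 1) zero_le_one hs (by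
      refine Asymptotics.IsBigO.of_bound (Real.log 4 + 4) (Eventually.of_forall fun n => ?_)
      have h2 := Chebyshev.psi_le_const_mul_self (x := (n:ℝ)) n.cast_nonneg
      have h3 := Chebyshev.psi_nonneg (n:ℝ)
      have h4 : ∑ k ∈ Finset.Icc 1 n, ArithmeticFunction.vonMangoldt k = Chebyshev.psi n := by
        rw [Chebyshev.psi, Nat.floor_natCast]; rfl
      rw [h4, Real.norm_of_nonneg h3, Real.rpow_one, Real.norm_of_nonneg n.cast_nonneg]
      exact h2)
    (fun n => ArithmeticFunction.vonMangoldt_nonneg)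
  rw [LSeries_vM hs] at h1
  have himg : Real.exp '' Set.Ioi 0 = Set.Ioi 1 := by
    ext x; constructor
    · rintro ⟨t, ht, rfl⟩; exact Real.one_lt_exp_iff.2 ht
    · intro hx
      have hx' : 1 < x := hx
      exact ⟨Real.log x, Real.log_pos hx', Real.exp_log (by linarith)⟩
  rw [← himg, change_var _ measurableSet_Ioi] at h1
  rw [eq_div_iff hz1, mul_comm, show z⁻¹ = (z + 1 - 1)⁻¹ by simp, h1]
  congr 1
  refine integral_congr_ae (Eventually.of_forall fun t => ?_)
  simp only [Aps]
  have h4 : ∑ k ∈ Finset.Icc 1 ⌊Real.exp t⌋₊, (ArithmeticFunction.vonMangoldt k : ℂ) =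
      (Chebyshev.psi (Real.exp t) : ℂ) := by
    rw [Chebyshev.psi]; push_cast; rfl
  rw [h4, Complex.cpow_def_of_ne_zero (by simp), ← Complex.ofReal_log (Real.exp_pos t).le, Real.log_exp]
  push_cast
  have : Complex.exp (-(t:ℂ)) * Complex.exp (-z * t) =
      Complex.exp t * Complex.exp (t * -(z + 1 + 1)) := by
    rw [← Complex.exp_add, ← Complex.exp_add]; congr 1; ring
  linear_combination (Chebyshev.psi (Real.exp t) : ℂ) * this

/-- The truncated function to which the Tauberian theorem is applied. -/
noncomputable def Fps : ℝ → ℂ := (Set.Ioi (0:ℝ)).indicator fun t =>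
  (Aps t : ℂ) - 1 + (1 + Real.eulerMascheroniConstant) * Complex.exp (-t)

lemma Fps_meas : Measurable Fps := by
  refine Measurable.indicator ?_ measurableSet_Ioi
  exact ((Complex.measurable_ofReal.comp Aps_meas).sub_const 1).add (by fun_prop)

lemma Fps_bound : ∃ M, ∀ t, ‖Fps t‖ ≤ M := by
  refine ⟨(Real.log 4 + 4) + 1 + ‖(1 + Real.eulerMascheroniConstant : ℂ)‖ * 1, fun t => ?_⟩
  have h4 : 0 ≤ Real.log 4 := Real.log_nonneg (by norm_num)
  rw [Fps, Set.indicator_apply]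
  split_ifs with ht
  · have ht' : 0 < t := ht
    refine (norm_add_le _ _).trans (add_le_add ((norm_sub_le _ _).trans (add_le_add ?_ (by simp))) ?_)
    · rw [Complex.norm_real, Real.norm_of_nonneg (Aps_nonneg t)]; exact Aps_le t
    · rw [norm_mul]
      refine mul_le_mul_of_nonneg_left ?_ (norm_nonneg _)
      rw [Complex.norm_exp, Real.exp_le_one_iff]
      simp [ht'.le]
  · rw [norm_zero]; positivity

lemma exp_int {z : ℂ} (hz : 0 < z.re) : IntegrableOn (fun t : ℝ => Complex.exp (-z * t)) (Set.Ioi 0) :=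
  integrableOn_exp_mul_complex_Ioi (by simpa using hz) 0

lemma exp_int_val {z : ℂ} (hz : 0 < z.re) :
    ∫ t in Set.Ioi (0:ℝ), Complex.exp (-z * t) = z⁻¹ := by
  rw [integral_exp_mul_complex_Ioi (by simpa using hz)]
  simp

lemma laplace_Fps {z : ℂ} (hz : 0 < z.re) :
    ∫ t : ℝ, Fps t * Complex.exp (-z * t) =
      (Real.eulerMascheroniConstant - qz (z + 1)) / (z + 1) := by
  have hz1 : 0 < (z + 1).re := by simp; linarith
  have hz0 : z ≠ 0 := by rintro rfl; simp at hz
  have hz10 : z + 1 ≠ 0 := by intro h; rw [h] at hz1; simp at hz1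
  have iA : IntegrableOn (fun t : ℝ => (Aps t : ℂ) * Complex.exp (-z * t)) (Set.Ioi 0) := by
    refine Integrable.bdd_mul (c := Real.log 4 + 4) (exp_int hz)
      (Complex.measurable_ofReal.comp Aps_meas).aestronglyMeasurable
      (Eventually.of_forall fun t => ?_)
    rw [Complex.norm_real, Real.norm_of_nonneg (Aps_nonneg t)]; exact Aps_le t
  have : ∀ t : ℝ, Fps t * Complex.exp (-z * t) = (Set.Ioi (0:ℝ)).indicator (fun t : ℝ =>
      ((Aps t : ℂ) * Complex.exp (-z * t) - Complex.exp (-z * t)) +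
      (1 + Real.eulerMascheroniConstant) * Complex.exp (-(z + 1) * t)) t := by
    intro t
    simp only [Fps, Set.indicator_apply]
    split_ifs
    · rw [show -(z + 1) * (t:ℂ) = -t + -z * t by ring, Complex.exp_add]; ring
    · simp
  simp_rw [this]
  have iB : IntegrableOn (fun t : ℝ => (Aps t : ℂ) * Complex.exp (-z * t) - Complex.exp (-z * t))
    (Set.Ioi 0) := iA.sub (exp_int hz)
  rw [integral_indicator measurableSet_Ioi,
    integral_add iB ((exp_int hz1).const_mul _), integral_sub iA (exp_int hz),
    integral_const_mul, laplace_Aps hz, exp_int_val hz, exp_int_val hz1]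
  field_simp
  ring

lemma tendsto_primitive : Tendsto (fun T : ℝ => ∫ s in (0:ℝ)..T, Fps s) atTop (𝓝 0) := by
  obtain ⟨M, hM⟩ := Fps_bound
  have hF0 : ∀ t ≤ 0, Fps t = 0 := fun t ht => Set.indicator_of_notMem (by simpa using ht) _
  have hii : ∀ a b, IntervalIntegrable Fps volume a b := fun a b =>
    (intervalIntegrable_const (c := M)).mono_fun Fps_meas.aestronglyMeasurable
      (Eventually.of_forall fun t => (hM t).trans (le_abs_self M))
  refine tauber _ M (fun z => -dslope (fun w => qz (w + 1)) 0 z / (z + 1)) ?_ ?_ ?_ ?_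
  · intro t ht
    rw [intervalIntegral.integral_of_ge ht, setIntegral_eq_zero_of_forall_eq_zero, neg_zero]
    exact fun x hx => hF0 x hx.2
  · intro a b
    rw [intervalIntegral.integral_interval_sub_left (hii _ _) (hii _ _)]
    exact intervalIntegral.norm_integral_le_of_norm_le_const fun t _ => hM t
  · intro z hz
    have hz' : 0 ≤ z.re := hz
    have hd : DifferentiableAt ℂ (fun w => qz (w + 1)) z :=
      DifferentiableAt.comp z (qz_diff (s := z + 1) (by simpa using hz')) (differentiableAt_id.add_const 1)
    refine ContinuousAt.continuousWithinAt (ContinuousAt.div (ContinuousAt.neg ?_) (by fun_prop) ?_)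
    · rcases eq_or_ne z 0 with rfl | h0
      · exact continuousAt_dslope_same.2 hd
      · exact (continuousAt_dslope_of_ne h0).2 hd.continuousAt
    · intro h
      have := congrArg Complex.re h
      simp at this
      linarith
  · intro z hz
    have hz0 : z ≠ 0 := by rintro rfl; simp at hz
    rw [laplace_primitive Fps_meas hF0 hM hz, laplace_Fps hz, dslope_of_ne _ hz0, slope_def_field]
    simp only [zero_add, sub_zero, qz_one]
    have hz10 : z + 1 ≠ 0 := by
      intro h
      have := congrArg Complex.re h
      simp at this
      linarith
    field_simp
    ring

lemma Aps_ii (a b : ℝ) : IntervalIntegrable Aps volume a b :=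
  (intervalIntegrable_const (c := Real.log 4 + 4)).mono_fun Aps_meas.aestronglyMeasurable
    (Eventually.of_forall fun t => by
      simp only
      rw [Real.norm_of_nonneg (Aps_nonneg t)]; exact (Aps_le t).trans (le_abs_self _))

lemma tendsto_B : Tendsto (fun T : ℝ => (∫ s in (0:ℝ)..T, Aps s) - T) atTop
    (𝓝 (-(1 + Real.eulerMascheroniConstant))) := by
  have h1 := (Complex.continuous_re.tendsto _).comp tendsto_primitive
  have h2 : Tendsto (fun T : ℝ => (1 + Real.eulerMascheroniConstant) * (1 - Real.exp (-T))) atTop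
      (𝓝 ((1 + Real.eulerMascheroniConstant) * (1 - 0))) :=
    (tendsto_const_nhds.sub (Real.tendsto_exp_neg_atTop_nhds_zero)).const_mul _
  have h3 := h1.sub h2
  simp only [Complex.zero_re, sub_zero, mul_one, zero_sub] at h3
  refine h3.congr' ?_
  filter_upwards [eventually_gt_atTop 0] with T hT
  have e1 : ∫ s in (0:ℝ)..T, Fps s = ((∫ s in (0:ℝ)..T, ((Aps s - 1) +
      (1 + Real.eulerMascheroniConstant) * Real.exp (-s)) : ℝ) : ℂ) := by
    rw [← intervalIntegral.integral_ofReal, intervalIntegral.integral_of_le hT.le,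
      intervalIntegral.integral_of_le hT.le]
    refine setIntegral_congr_fun measurableSet_Ioc fun s hs => ?_
    simp only [Fps]
    rw [Set.indicator_of_mem (Set.mem_Ioi.2 hs.1)]
    push_cast
    rfl
  have e2 : ∫ s in (0:ℝ)..T, Real.exp (-s) = 1 - Real.exp (-T) := by
    rw [intervalIntegral.integral_comp_neg (fun x => Real.exp x), integral_exp]; simp
  simp only [Function.comp]
  rw [e1, Complex.ofReal_re, intervalIntegral.integral_add ((Aps_ii _ _).sub (by simp))
    (Continuous.intervalIntegrable (by fun_prop) _ _),
    intervalIntegral.integral_sub (Aps_ii _ _) (by simp), intervalIntegral.integral_const_mul, e2]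
  simp

lemma Aps_shift {s t : ℝ} (hst : t ≤ s) : Aps t * Real.exp (t - s) ≤ Aps s := by
  have := Chebyshev.psi_mono (Real.exp_le_exp.2 hst)
  rw [Aps, Aps, mul_assoc, ← Real.exp_add, show -t + (t - s) = -s by ring]
  exact mul_le_mul_of_nonneg_right this (Real.exp_pos _).le

lemma int_lower {t δ : ℝ} (hδ : 0 ≤ δ) : Aps t * (1 - Real.exp (-δ)) ≤ ∫ s in t..(t + δ), Aps s := by
  have e : ∫ s in t..(t + δ), Aps t * Real.exp (t - s) = Aps t * (1 - Real.exp (-δ)) := by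
    rw [intervalIntegral.integral_const_mul,
      intervalIntegral.integral_comp_sub_left (fun x => Real.exp x), integral_exp]; simp
  rw [← e]
  exact intervalIntegral.integral_mono_on (by linarith)
    (Continuous.intervalIntegrable (by fun_prop) _ _) (Aps_ii _ _) fun s hs => Aps_shift hs.1

lemma int_upper {t δ : ℝ} (hδ : 0 ≤ δ) : ∫ s in (t - δ)..t, Aps s ≤ Aps t * (Real.exp δ - 1) := by
  have e : ∫ s in (t - δ)..t, Aps t * Real.exp (t - s) = Aps t * (Real.exp δ - 1) := by
    rw [intervalIntegral.integral_const_mul,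
      intervalIntegral.integral_comp_sub_left (fun x => Real.exp x), integral_exp]; simp
  rw [← e]
  refine intervalIntegral.integral_mono_on (by linarith) (Aps_ii _ _)
    (Continuous.intervalIntegrable (by fun_prop) _ _) fun s hs => ?_
  have := Aps_shift hs.2
  have h2 : Real.exp (s - t) * Real.exp (t - s) = 1 := by rw [← Real.exp_add]; simp
  calc Aps s = Aps s * Real.exp (s - t) * Real.exp (t - s) := by rw [mul_assoc, h2, mul_one]
    _ ≤ _ := mul_le_mul_of_nonneg_right this (Real.exp_pos _).le

lemma tendsto_Aps : Tendsto Aps atTop (𝓝 1) := by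
  set C := Real.log 4 + 4 with hCdef
  have hC0 : 0 < C := by have : 0 ≤ Real.log 4 := Real.log_nonneg (by norm_num)
                         linarith
  rw [Metric.tendsto_nhds]
  intro ε hε
  obtain ⟨δ, hδ0, hδ1, hδε⟩ : ∃ δ : ℝ, 0 < δ ∧ δ ≤ 1 ∧ (1 + C) * δ < ε := by
    refine ⟨min 1 (ε / (2 * (1 + C))), by positivity, min_le_left _ _, ?_⟩
    calc (1 + C) * min 1 (ε / (2 * (1 + C))) ≤ (1 + C) * (ε / (2 * (1 + C))) := by
          gcongr; exact min_le_right _ _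
      _ = ε / 2 := by field_simp
      _ < ε := by linarith
  have hB := tendsto_B
  have h1 := (hB.comp (tendsto_atTop_add_const_right atTop δ tendsto_id)).sub hB
  have h2 := hB.sub (hB.comp (tendsto_atTop_add_const_right atTop (-δ) tendsto_id))
  rw [sub_self] at h1 h2
  have hd2 : 0 < δ ^ 2 := by positivity
  filter_upwards [h1.eventually_lt_const hd2, h2.eventually_const_lt (neg_lt_zero.2 hd2)] with t ht1 ht2
  simp only [Function.comp, id, ← sub_eq_add_neg] at ht1 ht2
  have i1 := intervalIntegral.integral_interval_sub_left (Aps_ii 0 (t + δ)) (Aps_ii 0 t)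
  have i2 := intervalIntegral.integral_interval_sub_left (Aps_ii 0 t) (Aps_ii 0 (t - δ))
  have l1 := int_lower (t := t) hδ0.le
  have l2 := int_upper (t := t) hδ0.le
  have x1 : δ - δ ^ 2 ≤ 1 - Real.exp (-δ) := by
    have := Real.abs_exp_sub_one_sub_id_le (x := -δ) (by rwa [abs_neg, abs_of_pos hδ0])
    have := (abs_le.1 this).2
    linarith [neg_sq δ]
  have x2 : Real.exp δ - 1 ≤ δ + δ ^ 2 := by
    have := Real.abs_exp_sub_one_sub_id_le (x := δ) (by rwa [abs_of_pos hδ0])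
    have := (abs_le.1 this).2
    linarith
  have a0 := Aps_nonneg t
  have a1 := Aps_le t
  have y1 : Aps t * (δ - δ ^ 2) ≤ δ + δ ^ 2 := by
    have := mul_le_mul_of_nonneg_left x1 a0
    linarith
  have y2 : δ - δ ^ 2 ≤ Aps t * (δ + δ ^ 2) := by
    have := mul_le_mul_of_nonneg_left x2 a0
    linarith
  have z1 : Aps t * (1 - δ) ≤ 1 + δ := by
    refine le_of_mul_le_mul_right ?_ hδ0
    linarith
  have z2 : 1 - δ ≤ Aps t * (1 + δ) := by
    refine le_of_mul_le_mul_right ?_ hδ0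
    linarith
  have w : Aps t * δ ≤ C * δ := mul_le_mul_of_nonneg_right a1 hδ0.le
  rw [Real.dist_eq, abs_lt]
  constructor <;> linarith

lemma sum_eq {x : ℝ} (hx : 1 ≤ x) :
    ∑ n ∈ Finset.range (⌊x⌋₊ + 1), ArithmeticFunction.vonMangoldt n / n =
      Aps (Real.log x) + ∫ s in (0:ℝ)..Real.log x, Aps s := by
  have hx0 : 0 < x := by linarith
  have hpsi : ∀ y : ℝ, ∑ k ∈ Finset.Icc 0 ⌊y⌋₊, ArithmeticFunction.vonMangoldt k = Chebyshev.psi y :=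
    fun y => (Chebyshev.psi_eq_sum_Icc y).symm
  have hd : ∀ t : ℝ, deriv (fun t : ℝ => t⁻¹) t = -(t ^ 2)⁻¹ := fun t => by simp
  have h := sum_mul_eq_sub_integral_mul₀ (fun n => ArithmeticFunction.vonMangoldt n)
    (f := fun t : ℝ => t⁻¹) (by simp) x
    (fun t ht => differentiableAt_inv (by linarith [ht.1]))
    (by
      refine ContinuousOn.integrableOn_Icc ?_
      intro t ht
      have ht1 : t ≠ 0 := by linarith [ht.1]
      simp_rw [funext hd]
      exact ((continuousAt_id.pow 2).inv₀ (by simpa using ht1)).neg.continuousWithinAt)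
  simp only [hpsi, hd] at h
  have himg : Real.exp '' Set.Ioc 0 (Real.log x) = Set.Ioc 1 x := by
    ext y; constructor
    · rintro ⟨t, ht, rfl⟩
      exact ⟨Real.one_lt_exp_iff.2 ht.1, (Real.le_log_iff_exp_le hx0).1 ht.2⟩
    · intro hy
      have hy0 : 0 < y := by linarith [hy.1]
      exact ⟨Real.log y, ⟨Real.log_pos hy.1, Real.log_le_log hy0 hy.2⟩, Real.exp_log hy0⟩
  have hr : Finset.range (⌊x⌋₊ + 1) = Finset.Icc 0 ⌊x⌋₊ := by ext; simp
  have hcv := integral_image_eq_integral_abs_deriv_smul (f := Real.exp) (f' := Real.exp)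
    (measurableSet_Ioc (a := 0) (b := Real.log x))
    (fun x _ => (Real.hasDerivAt_exp x).hasDerivWithinAt) Real.exp_injective.injOn
    (fun t => -(t ^ 2)⁻¹ * Chebyshev.psi t)
  rw [himg] at hcv
  rw [hcv] at h
  rw [hr, intervalIntegral.integral_of_le (Real.log_nonneg hx)]
  have e1 : ∫ t in Set.Ioc 0 (Real.log x), |Real.exp t| • (-(Real.exp t ^ 2)⁻¹ * Chebyshev.psi (Real.exp t))
      = - ∫ t in Set.Ioc 0 (Real.log x), Aps t := by
    rw [← integral_neg]
    refine integral_congr_ae (Eventually.of_forall fun t => ?_)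
    have := Real.exp_pos t
    simp only [smul_eq_mul, Aps, Real.exp_neg, abs_of_pos this]
    field_simp
  rw [e1, sub_neg_eq_add] at h
  have e2 : Aps (Real.log x) = x⁻¹ * Chebyshev.psi x := by
    rw [Aps, Real.exp_neg, Real.exp_log hx0, mul_comm]
  rw [e2, ← h]
  exact Finset.sum_congr rfl fun n _ => by rw [div_eq_inv_mul]

open ArithmeticFunction in
/-- As `x → ∞`, `∑_{n ≤ x} Λ(n)/n − log x → −γ`. -/
theorem vonMangoldt_sum_div_sub_log_tendsto_neg_gamma :
    Filter.Tendsto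
      (fun x : ℝ =>
        (∑ n ∈ Finset.range (⌊x⌋₊ + 1), ArithmeticFunction.vonMangoldt n / n)
          - Real.log x)
      Filter.atTop (nhds (-Real.eulerMascheroniConstant)) := by
  have h := (tendsto_Aps.add tendsto_B).comp Real.tendsto_log_atTop
  rw [show (1:ℝ) + -(1 + Real.eulerMascheroniConstant) = -Real.eulerMascheroniConstant by ring] at h
  refine h.congr' ?_
  filter_upwards [eventually_ge_atTop 1] with x hx
  rw [sum_eq hx]
  simp only [Function.comp]
  ring
end

section
/- There is a constant C such that for all real x ≥ 2, |Σ_{p ≤ x, p prime} (log p)/p − log x| ≤ C (Mertens' first theorem: R(x) is bounded). -/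
lemma mf_log_factorial (n : ℕ) :
    Real.log (n.factorial : ℝ) = ∑ p ∈ (Finset.range (n + 1)).filter Nat.Prime,
      (padicValNat p n.factorial : ℝ) * Real.log p := by
  have h := Nat.prod_pow_prime_padicValNat n.factorial n.factorial_ne_zero
    (n.factorial + 1) (Nat.lt_succ_self _)
  have h1 : ((n.factorial : ℕ) : ℝ) = ∏ p ∈ (Finset.range (n.factorial + 1)).filter Nat.Prime,
      (p : ℝ) ^ padicValNat p n.factorial := by
    conv_lhs => rw [← h]
    push_cast
    rfl
  rw [h1, Real.log_prod]
  · simp only [Real.log_pow]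
    symm
    apply Finset.sum_subset
    · intro p hp
      simp only [Finset.mem_filter, Finset.mem_range] at hp ⊢
      have := n.self_le_factorial
      exact ⟨by omega, hp.2⟩
    · intro p hp hp'
      simp only [Finset.mem_filter, Finset.mem_range, not_and] at hp hp'
      have : ¬ p ∣ n.factorial := by
        rw [hp.2.dvd_factorial]
        intro h
        exact hp' (by omega) hp.2
      simp [padicValNat.eq_zero_of_not_dvd this]
  · intro p hp
    have := (Finset.mem_filter.mp hp).2.pos
    positivity

lemma mf_val_upper (n p : ℕ) (hp : p.Prime) :
    (padicValNat p n.factorial : ℝ) * (p - 1) ≤ n := by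
  haveI := Fact.mk hp
  have h := sub_one_mul_padicValNat_factorial (p := p) n
  have h2 : (p - 1) * padicValNat p n.factorial ≤ n := by omega
  have h3 : (((p - 1 : ℕ) : ℝ)) * (padicValNat p n.factorial : ℝ) ≤ n := by exact_mod_cast h2
  rw [Nat.cast_sub hp.one_le] at h3
  push_cast at h3
  linarith

lemma mf_val_lower (n p : ℕ) (hp : p.Prime) :
    (n : ℝ) / p - 1 ≤ padicValNat p n.factorial := by
  haveI := Fact.mk hp
  have h1 : padicValNat p (p * (n / p)).factorial ≤ padicValNat p n.factorial := by
    rw [← padicValNat_dvd_iff_le n.factorial_ne_zero]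
    exact pow_padicValNat_dvd.trans (Nat.factorial_dvd_factorial (Nat.mul_div_le n p))
  have h2 : n / p ≤ padicValNat p n.factorial := by
    have := padicValNat_factorial_mul (p := p) (n / p)
    omega
  have h3 : (n : ℝ) / p < ((n / p : ℕ) : ℝ) + 1 := by
    have := Nat.lt_floor_add_one ((n : ℝ) / p)
    rwa [Nat.floor_div_eq_div] at this
  have h4 : ((n / p : ℕ) : ℝ) ≤ padicValNat p n.factorial := by exact_mod_cast h2
  linarith

lemma mf_fact_lower (n : ℕ) (hn : 1 ≤ n) :
    (n : ℝ) * Real.log n - n ≤ Real.log (n.factorial : ℝ) := by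
  have h := Stirling.le_log_factorial_stirling (n := n) (by omega)
  have h1 : 0 ≤ Real.log n := Real.log_natCast_nonneg n
  have h2 : 0 ≤ Real.log (2 * Real.pi) := Real.log_nonneg (by linarith [Real.pi_gt_three])
  linarith

lemma mf_fact_upper (n : ℕ) : Real.log (n.factorial : ℝ) ≤ n * Real.log n := by
  rw [← Real.log_pow]
  apply Real.log_le_log (by positivity)
  exact_mod_cast Nat.factorial_le_pow n

lemma mf_term (p : ℕ) (hp : p.Prime) :
    Real.log p / (p - 1) ≤ Real.log p / p + 4 * (p : ℝ) ^ (-(3 / 2) : ℝ) := by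
  have h2 : (2 : ℝ) ≤ p := by exact_mod_cast hp.two_le
  have h0 : (0 : ℝ) < p := by linarith
  have hlog := Real.log_le_rpow_div (x := (p : ℝ)) h0.le (ε := 1 / 2) (by norm_num)
  have hl0 : 0 ≤ Real.log p := Real.log_natCast_nonneg p
  have e : (p : ℝ) ^ (-(3 / 2) : ℝ) = (p : ℝ) ^ (1 / 2 : ℝ) / (p : ℝ) ^ 2 := by
    rw [← Real.rpow_natCast, ← Real.rpow_sub h0]
    norm_num
  have e2 : Real.log p / (p - 1) = Real.log p / p + Real.log p / (p * (p - 1)) := by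
    have : (p : ℝ) - 1 ≠ 0 := by linarith
    field_simp
    ring
  rw [e2, e]
  have : Real.log p / (p * (p - 1)) ≤ 4 * ((p : ℝ) ^ (1 / 2 : ℝ) / (p : ℝ) ^ 2) := by
    calc Real.log p / (p * (p - 1)) ≤ Real.log p / ((p : ℝ) ^ 2 / 2) := by
          apply div_le_div_of_nonneg_left hl0 (by positivity)
          nlinarith
      _ ≤ ((p : ℝ) ^ (1 / 2 : ℝ) / (1 / 2)) / ((p : ℝ) ^ 2 / 2) := by gcongr
      _ = _ := by field_simp; norm_num
  linarith

lemma mf_theta (n : ℕ) :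
    ∑ p ∈ (Finset.range (n + 1)).filter Nat.Prime, Real.log p ≤ Real.log 4 * n := by
  have h := Chebyshev.theta_le_log4_mul_x (x := (n : ℝ)) (by positivity)
  rw [Chebyshev.theta_eq_sum_primesLE_log] at h
  exact h

/-- Mertens' first theorem: there is a constant `C` such that
`|∑_{p ≤ x, p prime} (log p)/p − log x| ≤ C` for all real `x ≥ 2`. -/
theorem mertens_first :
    ∃ C : ℝ, ∀ x : ℝ, 2 ≤ x →
      |(∑ p ∈ (Finset.range (⌊x⌋₊ + 1)).filter Nat.Prime, Real.log p / p)
        - Real.log x| ≤ C := by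
  have hs : Summable (fun k : ℕ => 4 * (k : ℝ) ^ (-(3 / 2) : ℝ)) :=
    (Real.summable_nat_rpow.mpr (by norm_num)).mul_left 4
  set K := ∑' k : ℕ, 4 * (k : ℝ) ^ (-(3 / 2) : ℝ) with hK
  have hK0 : 0 ≤ K := tsum_nonneg fun k => by positivity
  refine ⟨K + 1 + Real.log 2 + Real.log 4, fun x hx => ?_⟩
  set n := ⌊x⌋₊ with hn
  have hn2 : 2 ≤ n := Nat.le_floor (by exact_mod_cast hx)
  have hnx : (n : ℝ) ≤ x := Nat.floor_le (by linarith)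
  have hxn : x < n + 1 := Nat.lt_floor_add_one x
  have hn2r : (2 : ℝ) ≤ n := by exact_mod_cast hn2
  have hn0 : (0 : ℝ) < n := by linarith
  have hl1 : Real.log n ≤ Real.log x := Real.log_le_log hn0 hnx
  have hl2 : Real.log x ≤ Real.log n + Real.log 2 := by
    rw [← Real.log_mul hn0.ne' (by norm_num)]
    exact Real.log_le_log (by linarith) (by linarith)
  have hlog2 : 0 ≤ Real.log 2 := Real.log_nonneg (by norm_num)
  have hlog4 : 0 ≤ Real.log 4 := Real.log_nonneg (by norm_num)
  set P := (Finset.range (n + 1)).filter Nat.Prime with hP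
  set S := ∑ p ∈ P, Real.log p / p with hS
  have hpr : ∀ p ∈ P, p.Prime := fun p hp => (Finset.mem_filter.mp hp).2
  have hup : n * S - Real.log 4 * n ≤ n * Real.log n := by
    refine le_trans ?_ (mf_fact_upper n)
    have h1 : ∑ p ∈ P, ((n : ℝ) / p - 1) * Real.log p ≤ Real.log (n.factorial : ℝ) := by
      rw [mf_log_factorial]
      exact Finset.sum_le_sum fun p hp => mul_le_mul_of_nonneg_right
        (mf_val_lower n p (hpr p hp)) (Real.log_natCast_nonneg p)
    have h2 : ∑ p ∈ P, ((n : ℝ) / p - 1) * Real.log p = n * S - ∑ p ∈ P, Real.log p := by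
      rw [hS, Finset.mul_sum, ← Finset.sum_sub_distrib]
      exact Finset.sum_congr rfl fun p _ => by ring
    have h3 := mf_theta n
    linarith
  have hlow : n * Real.log n - n ≤ n * (S + K) := by
    refine (mf_fact_lower n (by omega)).trans ?_
    have h1 : Real.log (n.factorial : ℝ) ≤
        ∑ p ∈ P, n * (Real.log p / p + 4 * (p : ℝ) ^ (-(3 / 2) : ℝ)) := by
      rw [mf_log_factorial]
      refine Finset.sum_le_sum fun p hp => ?_
      have hpp := hpr p hp
      have hp1 : (0 : ℝ) < (p : ℝ) - 1 := by
        have : (2 : ℝ) ≤ p := by exact_mod_cast hpp.two_le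
        linarith
      calc (padicValNat p n.factorial : ℝ) * Real.log p
          ≤ (n / (p - 1)) * Real.log p := by
            apply mul_le_mul_of_nonneg_right _ (Real.log_natCast_nonneg p)
            rw [le_div_iff₀ hp1]
            exact mf_val_upper n p hpp
        _ = n * (Real.log p / (p - 1)) := by ring
        _ ≤ _ := mul_le_mul_of_nonneg_left (mf_term p hpp) hn0.le
    rw [← Finset.mul_sum, Finset.sum_add_distrib] at h1
    refine h1.trans (mul_le_mul_of_nonneg_left ?_ hn0.le)
    have := hs.sum_le_tsum P (fun k _ => by positivity)
    linarith
  have hup' : S - Real.log 4 ≤ Real.log n := le_of_mul_le_mul_left (by linarith) hn0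
  have hlow' : Real.log n - 1 ≤ S + K := le_of_mul_le_mul_left (by linarith) hn0
  rw [abs_le]
  constructor <;> linarith
end
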